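/- arXiv:2007.06184 — 6 statements merged into one kernel-verified Lean document; each statement's English description precedes it below -/
import Mathlib

section
/- For any stationary policy π in a finite discounted MDP, the value loss of π is bounded by the discounted expected optimal-action-value gap: max_{s∈𝒮} (v*(s) − v_π(s)) ≤ (1/(1−γ)) · max_{s₀∈𝒮} Σ_{a∈𝒜} π(a|s₀)·(v*(s₀) − q*(s₀,a)). -/
open scoped BigOperators

namespace MDPPlan

variable {S A : Type} [Fintype S] [Fintype A] [DecidableEq S] {d m : ℕ}

/-- `φ_sᵀθ`: dot product of the feature vector of state `s` with weights `θ`. -/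
noncomputable def phiDot (Φ : S → Fin d → ℝ) (θ : Fin d → ℝ) (s : S) : ℝ :=
  ∑ j, Φ s j * θ j

/-- The sequence `𝒮₊ = (s₀, s₁, …, s_m)`: `none` is the planning state `s₀`,
`some i` is the `i`-th core state. -/
def splus (s₀ : S) (c : Fin m → S) : Option (Fin m) → S := fun o => o.elim s₀ c

/-- State-transition matrix `P_π` of a stationary policy `π`. -/
noncomputable def Ppi (P : S → A → S → ℝ) (π : S → A → ℝ) : Matrix S S ℝ :=
  Matrix.of fun s s' => ∑ a, π s a * P s a s'

/-- Expected reward `r_π` of a stationary policy `π`. -/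
noncomputable def rpi (r : S → A → ℝ) (π : S → A → ℝ) : S → ℝ :=
  fun s => ∑ a, π s a * r s a

/-- `π` is a stationary policy: each `π(·|s)` is a probability distribution over actions. -/
def IsPolicy (π : S → A → ℝ) : Prop := (∀ s a, 0 ≤ π s a) ∧ ∀ s, ∑ a, π s a = 1

/-- Value function `v_π = Σ_{t≥0} (γ P_π)^t r_π`. -/
noncomputable def vpi (γ : ℝ) (P : S → A → S → ℝ) (r : S → A → ℝ) (π : S → A → ℝ) :
    S → ℝ :=
  ∑' t : ℕ, ((γ • Ppi P π) ^ t).mulVec (rpi r π)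

/-- Optimal value function `v*(s) = sup_π v_π(s)`. -/
noncomputable def vstar (γ : ℝ) (P : S → A → S → ℝ) (r : S → A → ℝ) : S → ℝ :=
  fun s => ⨆ π : {π : S → A → ℝ // IsPolicy π}, vpi γ P r π.1 s

/-- Optimal action-value function `q*(s,a) = r_{sa} + γ P_{sa} v*`. -/
noncomputable def qstar (γ : ℝ) (P : S → A → S → ℝ) (r : S → A → ℝ) (s : S) (a : A) : ℝ :=
  r s a + γ * ∑ s', P s a s' * vstar γ P r s'

/-- `ε_approx = inf_θ max_s |v*(s) − φ_sᵀθ|`. -/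
noncomputable def epsApprox (Φ : S → Fin d → ℝ) (v : S → ℝ) : ℝ :=
  ⨅ θ : Fin d → ℝ, ⨆ s : S, |v s - phiDot Φ θ s|

/-- Membership in `Λ`: nonnegative and the `s₀`-block sums to one. -/
def InLambda (lam : Option (Fin m) × A → ℝ) : Prop :=
  (∀ p, 0 ≤ lam p) ∧ ∑ a, lam (none, a) = 1

/-- The CoreLP equality constraint `φ_{s₀}ᵀ + λᵀW(γP − E)Φ = 0ᵀ`. -/
def CoreLPConstraint (γ : ℝ) (P : S → A → S → ℝ) (Φ : S → Fin d → ℝ) (s₀ : S)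
    (c : Fin m → S) (lam : Option (Fin m) × A → ℝ) : Prop :=
  ∀ j : Fin d, Φ s₀ j + ∑ p : Option (Fin m) × A,
    lam p * (γ * (∑ s', P (splus s₀ c p.1) p.2 s' * Φ s' j) - Φ (splus s₀ c p.1) j) = 0

/-- The CoreLP objective `λᵀWr`. -/
noncomputable def CoreLPObj (r : S → A → ℝ) (s₀ : S) (c : Fin m → S)
    (lam : Option (Fin m) × A → ℝ) : ℝ :=
  ∑ p : Option (Fin m) × A, lam p * r (splus s₀ c p.1) p.2

/-- The optimal value `V†` of CoreLP. -/
noncomputable def Vdagger (γ : ℝ) (P : S → A → S → ℝ) (r : S → A → ℝ)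
    (Φ : S → Fin d → ℝ) (s₀ : S) (c : Fin m → S) : ℝ :=
  sSup {x : ℝ | ∃ lam : Option (Fin m) × A → ℝ,
    InLambda lam ∧ CoreLPConstraint γ P Φ s₀ c lam ∧ x = CoreLPObj r s₀ c lam}

/-- Feasibility for LRALP: `W*r + W*(γP − E)Φθ ≤ 0`. -/
def LRALPFeasible (γ : ℝ) (P : S → A → S → ℝ) (r : S → A → ℝ) (Φ : S → Fin d → ℝ)
    (c : Fin m → S) (θ : Fin d → ℝ) : Prop :=
  ∀ (i : Fin m) (a : A),
    r (c i) a + (γ * (∑ s', P (c i) a s' * phiDot Φ θ s') - phiDot Φ θ (c i)) ≤ 0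

/-- `V_LRALP(μ) = min { μᵀΦθ : θ feasible for LRALP }`. -/
noncomputable def VLRALP (γ : ℝ) (P : S → A → S → ℝ) (r : S → A → ℝ) (Φ : S → Fin d → ℝ)
    (c : Fin m → S) (μ : S → ℝ) : ℝ :=
  sInf {x : ℝ | ∃ θ : Fin d → ℝ, LRALPFeasible γ P r Φ c θ ∧ x = ∑ s, μ s * phiDot Φ θ s}

/-- The Saddle CoreLP objective `f(λ,θ) = λᵀWr + φ_{s₀}ᵀθ + λᵀW(γP − E)Φθ`. -/
noncomputable def fObj (γ : ℝ) (P : S → A → S → ℝ) (r : S → A → ℝ) (Φ : S → Fin d → ℝ)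
    (s₀ : S) (c : Fin m → S) (lam : Option (Fin m) × A → ℝ) (θ : Fin d → ℝ) : ℝ :=
  CoreLPObj r s₀ c lam + phiDot Φ θ s₀ +
    ∑ p : Option (Fin m) × A,
      lam p * (γ * (∑ s', P (splus s₀ c p.1) p.2 s' * phiDot Φ θ s') -
        phiDot Φ θ (splus s₀ c p.1))

/-- The Saddle LRALP objective `g_μ(λ*,θ) = λ*ᵀW*r + μᵀΦθ + λ*ᵀW*(γP − E)Φθ`. -/
noncomputable def gObj (γ : ℝ) (P : S → A → S → ℝ) (r : S → A → ℝ) (Φ : S → Fin d → ℝ)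
    (c : Fin m → S) (μ : S → ℝ) (lamS : Fin m × A → ℝ) (θ : Fin d → ℝ) : ℝ :=
  (∑ p : Fin m × A, lamS p * r (c p.1) p.2) + (∑ s, μ s * phiDot Φ θ s) +
    ∑ p : Fin m × A,
      lamS p * (γ * (∑ s', P (c p.1) p.2 s' * phiDot Φ θ s') - phiDot Φ θ (c p.1))

/-- The `𝓑`-bounded duality gap `δ_𝓑(λ̂,θ̂) = max_{λ∈Λ_γ} f(λ,θ̂) − inf_{θ∈𝓑} f(λ̂,θ)`. -/
noncomputable def dualityGap (γ : ℝ) (P : S → A → S → ℝ) (r : S → A → ℝ)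
    (Φ : S → Fin d → ℝ) (s₀ : S) (c : Fin m → S) (Bset : Set (Fin d → ℝ))
    (lamHat : Option (Fin m) × A → ℝ) (θHat : Fin d → ℝ) : ℝ :=
  sSup {x : ℝ | ∃ lam : Option (Fin m) × A → ℝ,
      InLambda lam ∧ (∑ p, |lam p|) = 1 / (1 - γ) ∧ x = fObj γ P r Φ s₀ c lam θHat} -
    sInf {x : ℝ | ∃ θ ∈ Bset, x = fObj γ P r Φ s₀ c lamHat θ}


theorem Ppi_norm_le {S A : Type} [Fintype S] [Fintype A]
    (γ : ℝ) (hγ0 : 0 ≤ γ)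
    (P : S → A → S → ℝ) (hP0 : ∀ s a s', 0 ≤ P s a s')
    (hP1 : ∀ s a, ∑ s', P s a s' = 1)
    (π : S → A → ℝ) (hπ : IsPolicy π) (x : S → ℝ) :
    ‖(γ • Ppi P π).mulVec x‖ ≤ γ * ‖x‖ := by
  have h0 : ∀ s s', 0 ≤ Ppi P π s s' := fun s s' =>
    Finset.sum_nonneg fun a _ => mul_nonneg (hπ.1 s a) (hP0 s a s')
  have h1 : ∀ s, ∑ s', Ppi P π s s' = 1 := by
    intro s
    simp only [Ppi, Matrix.of_apply]
    rw [Finset.sum_comm]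
    simp only [← Finset.mul_sum, hP1, mul_one, hπ.2]
  rw [Matrix.smul_mulVec, norm_smul, Real.norm_of_nonneg hγ0]
  refine mul_le_mul_of_nonneg_left ?_ hγ0
  refine (pi_norm_le_iff_of_nonneg (norm_nonneg x)).2 fun s => ?_
  calc ‖(Ppi P π).mulVec x s‖ ≤ ∑ s', ‖Ppi P π s s' * x s'‖ := norm_sum_le _ _
    _ ≤ ∑ s', Ppi P π s s' * ‖x‖ := by
        refine Finset.sum_le_sum fun s' _ => ?_
        rw [norm_mul, Real.norm_of_nonneg (h0 s s')]
        exact mul_le_mul_of_nonneg_left (norm_le_pi_norm x s') (h0 s s')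
    _ = ‖x‖ := by rw [← Finset.sum_mul, h1, one_mul]

theorem vpi_bellman {S A : Type} [Fintype S] [Fintype A] [DecidableEq S]
    (γ : ℝ) (hγ0 : 0 ≤ γ) (hγ1 : γ < 1)
    (P : S → A → S → ℝ) (hP0 : ∀ s a s', 0 ≤ P s a s')
    (hP1 : ∀ s a, ∑ s', P s a s' = 1)
    (r : S → A → ℝ) (π : S → A → ℝ) (hπ : IsPolicy π) :
    vpi γ P r π = rpi r π + (γ • Ppi P π).mulVec (vpi γ P r π) := by
  have hs : Summable fun t : ℕ => ((γ • Ppi P π) ^ t).mulVec (rpi r π) := by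
    refine Summable.of_norm_bounded (g := fun t : ℕ => γ ^ t * ‖rpi r π‖)
      ((summable_geometric_of_lt_one hγ0 hγ1).mul_right _) fun t => ?_
    induction t with
    | zero => simp
    | succ t ih =>
      rw [pow_succ', ← Matrix.mulVec_mulVec, pow_succ', mul_assoc]
      exact (Ppi_norm_le γ hγ0 P hP0 hP1 π hπ _).trans (mul_le_mul_of_nonneg_left ih hγ0)
  have hm := (LinearMap.toContinuousLinearMap (Matrix.mulVecLin (γ • Ppi P π))).map_tsum hs
  simp only [LinearMap.coe_toContinuousLinearMap', Matrix.mulVecLin_apply] at hm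
  unfold vpi
  rw [hm]
  conv_lhs => rw [hs.tsum_eq_zero_add]
  simp only [pow_zero, Matrix.one_mulVec, pow_succ', Matrix.mulVec_mulVec]

/-- performance-difference bound for any stationary policy. -/
theorem value_loss_le_discounted_gap
    {S A : Type} [Fintype S] [Fintype A] [DecidableEq S] [Nonempty S] [Nonempty A]
    (γ : ℝ) (hγ0 : 0 ≤ γ) (hγ1 : γ < 1)
    (P : S → A → S → ℝ) (hP0 : ∀ s a s', 0 ≤ P s a s')
    (hP1 : ∀ s a, ∑ s', P s a s' = 1)
    (r : S → A → ℝ)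
    (π : S → A → ℝ) (hπ : IsPolicy π) :
    (⨆ s : S, (vstar γ P r s - vpi γ P r π s)) ≤
      (1 / (1 - γ)) *
        ⨆ s₀ : S, ∑ a, π s₀ a * (vstar γ P r s₀ - qstar γ P r s₀ a) := by
  have hB := vpi_bellman γ hγ0 hγ1 P hP0 hP1 r π hπ
  set v := vpi γ P r π with hv
  set w := vstar γ P r with hw
  set G := ⨆ s₀ : S, ∑ a, π s₀ a * (w s₀ - qstar γ P r s₀ a) with hG
  set M := ⨆ s : S, (w s - v s) with hM
  have hMle : ∀ s, w s - v s ≤ M := fun s =>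
    le_ciSup (f := fun s => w s - v s) (Set.finite_range _).bddAbove s
  have hGle : ∀ s, ∑ a, π s a * (w s - qstar γ P r s a) ≤ G := fun s =>
    le_ciSup (f := fun s => ∑ a, π s a * (w s - qstar γ P r s a))
      (Set.finite_range _).bddAbove s
  have key : M ≤ G + γ * M := by
    refine ciSup_le fun s => ?_
    have hBs : v s = ∑ a, π s a * (r s a + γ * ∑ s', P s a s' * v s') := by
      have h := congrFun hB s
      rw [h, Matrix.smul_mulVec]
      simp only [Pi.add_apply, Pi.smul_apply, rpi, Ppi, Matrix.mulVec, dotProduct,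
        Matrix.of_apply, smul_eq_mul, mul_add, Finset.sum_add_distrib, Finset.sum_mul,
        Finset.mul_sum]
      congr 1
      rw [Finset.sum_comm]
      refine Finset.sum_congr rfl fun a _ => Finset.sum_congr rfl fun s' _ => ?_
      ring
    have hd : w s - v s = ∑ a, π s a * (w s - qstar γ P r s a)
        + ∑ a, π s a * (γ * ∑ s', P s a s' * (w s' - v s')) := by
      rw [hBs]
      have : w s = ∑ a, π s a * w s := by rw [← Finset.sum_mul, hπ.2, one_mul]
      conv_lhs => rw [this]
      rw [← Finset.sum_sub_distrib, ← Finset.sum_add_distrib]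
      refine Finset.sum_congr rfl fun a _ => ?_
      simp only [qstar, ← hw, mul_sub, Finset.sum_sub_distrib]
      ring
    rw [hd]
    refine add_le_add (hGle s) ?_
    calc _ ≤ ∑ a, π s a * (γ * M) := by
          refine Finset.sum_le_sum fun a _ => mul_le_mul_of_nonneg_left
            (mul_le_mul_of_nonneg_left ?_ hγ0) (hπ.1 s a)
          calc _ ≤ ∑ s', P s a s' * M := Finset.sum_le_sum fun s' _ =>
                mul_le_mul_of_nonneg_left (hMle s') (hP0 s a s')
            _ = M := by rw [← Finset.sum_mul, hP1, one_mul]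
      _ = γ * M := by rw [← Finset.sum_mul, hπ.2, one_mul]
  have h1 : 0 < 1 - γ := by linarith
  rw [one_div, ← div_eq_inv_mul, le_div_iff₀ h1]
  linarith

end MDPPlan
end

section
/- Under the feature and core-state assumptions, the optimal value V† of the linear program CoreLP satisfies |V† − v*(s₀)| ≤ 10γ·ε_approx/(1−γ). -/
open scoped BigOperators

namespace MDPPlan

variable {S A : Type} [Fintype S] [Fintype A] [DecidableEq S] {d m : ℕ}

section Neumann

attribute [local instance] Matrix.linftyOpNormedRing Matrix.linftyOpNormedAlgebra

theorem neumann {n : Type} [Fintype n] [DecidableEq n] (γ : ℝ) (hγ0 : 0 ≤ γ) (hγ1 : γ < 1)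
    (Q : Matrix n n ℝ) (hQ0 : ∀ i j, 0 ≤ Q i j) (hQ1 : ∀ i, ∑ j, Q i j = 1) :
    ∃ N : Matrix n n ℝ, HasSum (fun t : ℕ => (γ • Q) ^ t) N ∧ N * (1 - γ • Q) = 1 ∧
      (1 - γ • Q) * N = 1 ∧ ∀ i j, 0 ≤ N i j := by
  have hn : ‖γ • Q‖ < 1 := by
    have h1 : ‖Q‖ ≤ 1 := by
      rw [Matrix.linfty_opNorm_def]
      have : (Finset.univ.sup fun i => ∑ j, ‖Q i j‖₊) ≤ (1 : NNReal) := by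
        refine Finset.sup_le fun i _ => ?_
        rw [← NNReal.coe_le_coe]
        push_cast
        rw [← hQ1 i]
        exact Finset.sum_le_sum fun j _ => by rw [Real.norm_of_nonneg (hQ0 i j)]
      exact_mod_cast this
    rw [norm_smul, Real.norm_of_nonneg hγ0]
    nlinarith [norm_nonneg Q]
  have hs := summable_geometric_of_norm_lt_one hn
  refine ⟨∑' t : ℕ, (γ • Q) ^ t, hs.hasSum, geom_series_mul_neg _ hn, mul_neg_geom_series _ hn, ?_⟩
  intro i j
  have hp : ∀ t : ℕ, ∀ i j, 0 ≤ ((γ • Q) ^ t) i j := by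
    intro t
    induction t with
    | zero =>
      intro i j
      rw [pow_zero, Matrix.one_apply]
      split_ifs <;> norm_num
    | succ t ih =>
      intro i j
      rw [pow_succ, Matrix.mul_apply]
      exact Finset.sum_nonneg fun k _ => mul_nonneg (ih i k) (mul_nonneg hγ0 (hQ0 k j))
  have h2 : HasSum (fun t : ℕ => ((γ • Q) ^ t) i j) ((∑' t : ℕ, (γ • Q) ^ t) i j) := by
    have := hs.hasSum
    exact Pi.hasSum.1 (Pi.hasSum.1 this i) j
  exact h2.nonneg fun t => hp t i j

end Neumann

theorem min_nonneg {n : Type} [Fintype n] (γ : ℝ) (hγ0 : 0 ≤ γ) (hγ1 : γ < 1)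
    (Q : n → n → ℝ) (hQ0 : ∀ i j, 0 ≤ Q i j) (hQ1 : ∀ i, ∑ j, Q i j = 1)
    (x : n → ℝ) (hx : ∀ i, γ * ∑ j, Q i j * x j ≤ x i) (i : n) : 0 ≤ x i := by
  haveI : Nonempty n := ⟨i⟩
  obtain ⟨k, hk⟩ := Finite.exists_min x
  have h1 : x k ≤ ∑ j, Q k j * x j := by
    calc x k = ∑ j, Q k j * x k := by rw [← Finset.sum_mul, hQ1, one_mul]
      _ ≤ _ := Finset.sum_le_sum fun j _ => mul_le_mul_of_nonneg_left (hk j) (hQ0 k j)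
  have h2 := hx k
  have h3 : γ * x k ≤ x k := le_trans (mul_le_mul_of_nonneg_left h1 hγ0) h2
  have : 0 ≤ x k := by nlinarith
  exact this.trans (hk i)

theorem Ppi_nonneg {S A : Type} [Fintype S] [Fintype A] [DecidableEq S]
    (P : S → A → S → ℝ) (hP0 : ∀ s a s', 0 ≤ P s a s')
    (π : S → A → ℝ) (hπ : IsPolicy π) (s s' : S) : 0 ≤ Ppi P π s s' :=
  Finset.sum_nonneg fun a _ => mul_nonneg (hπ.1 s a) (hP0 s a s')

theorem Ppi_sum {S A : Type} [Fintype S] [Fintype A] [DecidableEq S]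
    (P : S → A → S → ℝ) (hP1 : ∀ s a, ∑ s', P s a s' = 1)
    (π : S → A → ℝ) (hπ : IsPolicy π) (s : S) : ∑ s', Ppi P π s s' = 1 := by
  simp only [Ppi, Matrix.of_apply]
  rw [Finset.sum_comm]
  simp_rw [← Finset.mul_sum, hP1, mul_one]
  exact hπ.2 s

theorem vpi_fixed {S A : Type} [Fintype S] [Fintype A] [DecidableEq S]
    (γ : ℝ) (hγ0 : 0 ≤ γ) (hγ1 : γ < 1)
    (P : S → A → S → ℝ) (hP0 : ∀ s a s', 0 ≤ P s a s')
    (hP1 : ∀ s a, ∑ s', P s a s' = 1)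
    (r : S → A → ℝ) (π : S → A → ℝ) (hπ : IsPolicy π) (s : S) :
    vpi γ P r π s = rpi r π s + γ * ∑ s', Ppi P π s s' * vpi γ P r π s' := by
  obtain ⟨N, hN, -, h2, -⟩ := neumann γ hγ0 hγ1 (Ppi P π) (Ppi_nonneg P hP0 π hπ)
    (Ppi_sum P hP1 π hπ)
  have h3 : vpi γ P r π = N.mulVec (rpi r π) := by
    refine HasSum.tsum_eq ?_
    exact hN.map (Matrix.mulVec.addMonoidHomLeft (rpi r π))
      (by
        change Continuous fun M : Matrix S S ℝ => M.mulVec (rpi r π)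
        fun_prop)
  have h4 : (1 - γ • Ppi P π).mulVec (vpi γ P r π) = rpi r π := by
    rw [h3, Matrix.mulVec_mulVec, h2, Matrix.one_mulVec]
  have h5 := congrFun h4 s
  rw [Matrix.sub_mulVec, Matrix.one_mulVec, Matrix.smul_mulVec] at h5
  simp only [Pi.sub_apply, Pi.smul_apply, smul_eq_mul, Matrix.mulVec, dotProduct] at h5
  linarith

theorem Ppi_mul {S A : Type} [Fintype S] [Fintype A] [DecidableEq S]
    (P : S → A → S → ℝ) (π : S → A → ℝ) (v : S → ℝ) (s : S) :
    ∑ s', Ppi P π s s' * v s' = ∑ a, π s a * ∑ s', P s a s' * v s' := by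
  simp only [Ppi, Matrix.of_apply, Finset.sum_mul, Finset.mul_sum]
  rw [Finset.sum_comm]
  simp only [mul_assoc]

theorem exists_bellman {S A : Type} [Fintype S] [Fintype A] [DecidableEq S] [Nonempty A]
    (γ : ℝ) (hγ0 : 0 ≤ γ) (hγ1 : γ < 1)
    (P : S → A → S → ℝ) (hP0 : ∀ s a s', 0 ≤ P s a s')
    (hP1 : ∀ s a, ∑ s', P s a s' = 1) (r : S → A → ℝ) :
    ∃ (u : S → ℝ) (g : S → A), (∀ s a, r s a + γ * ∑ s', P s a s' * u s' ≤ u s) ∧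
      ∀ s, u s = r s (g s) + γ * ∑ s', P s (g s) s' * u s' := by
  let B : (S → ℝ) → S → A → ℝ := fun u s a => r s a + γ * ∑ s', P s a s' * u s'
  let T : (S → ℝ) → (S → ℝ) := fun u s => Finset.univ.sup' Finset.univ_nonempty (B u s)
  have hB : ∀ u w s a, B u s a ≤ B w s a + γ * dist u w := by
    intro u w s a
    have : ∑ s', P s a s' * u s' ≤ ∑ s', P s a s' * w s' + dist u w := by
      calc ∑ s', P s a s' * u s' ≤ ∑ s', P s a s' * (w s' + dist u w) := by
            refine Finset.sum_le_sum fun s' _ => mul_le_mul_of_nonneg_left ?_ (hP0 s a s')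
            have h1 := dist_le_pi_dist u w s'
            rw [Real.dist_eq] at h1
            linarith [le_abs_self (u s' - w s')]
        _ = _ := by simp_rw [mul_add, Finset.sum_add_distrib, ← Finset.sum_mul, hP1, one_mul]
    have := mul_le_mul_of_nonneg_left this hγ0
    simp only [B]
    linarith
  have hT : ∀ u w s, T u s ≤ T w s + γ * dist u w := by
    intro u w s
    refine Finset.sup'_le _ _ fun a ha => (hB u w s a).trans ?_
    have := Finset.le_sup' (B w s) ha
    simp only [T]
    linarith
  have hc : ContractingWith ⟨γ, hγ0⟩ T := by
    refine ⟨by exact_mod_cast hγ1, LipschitzWith.of_dist_le_mul fun u w => ?_⟩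
    change dist (T u) (T w) ≤ γ * dist u w
    refine (dist_pi_le_iff (by positivity)).2 fun s => ?_
    rw [Real.dist_eq, abs_le]
    have h1 := hT u w s
    have h2 := hT w u s
    rw [dist_comm] at h2
    constructor <;> linarith
  have hfix : T (ContractingWith.fixedPoint T hc) = ContractingWith.fixedPoint T hc :=
    hc.fixedPoint_isFixedPt
  set u := ContractingWith.fixedPoint T hc
  have hg : ∀ s, ∃ a, T u s = B u s a := by
    intro s
    obtain ⟨a, -, ha⟩ := Finset.exists_mem_eq_sup' Finset.univ_nonempty (B u s)
    exact ⟨a, ha⟩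
  choose g hg using hg
  refine ⟨u, g, fun s a => ?_, fun s => ?_⟩
  · have := Finset.le_sup' (B u s) (Finset.mem_univ a)
    exact this.trans (le_of_eq (congrFun hfix s))
  · exact (congrFun hfix s).symm.trans (hg s)

theorem vstar_bellman {S A : Type} [Fintype S] [Fintype A] [DecidableEq S] [Nonempty A]
    (γ : ℝ) (hγ0 : 0 ≤ γ) (hγ1 : γ < 1)
    (P : S → A → S → ℝ) (hP0 : ∀ s a s', 0 ≤ P s a s')
    (hP1 : ∀ s a, ∑ s', P s a s' = 1) (r : S → A → ℝ) :
    ∃ (g : S → A), (∀ s a, r s a + γ * ∑ s', P s a s' * vstar γ P r s' ≤ vstar γ P r s) ∧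
      ∀ s, vstar γ P r s = r s (g s) + γ * ∑ s', P s (g s) s' * vstar γ P r s' := by
  classical
  obtain ⟨u, g, h1, h2⟩ := exists_bellman γ hγ0 hγ1 P hP0 hP1 r
  have hle : ∀ π, IsPolicy π → ∀ s, vpi γ P r π s ≤ u s := by
    intro π hπ s
    have := min_nonneg γ hγ0 hγ1 (Ppi P π) (Ppi_nonneg P hP0 π hπ) (Ppi_sum P hP1 π hπ)
      (fun s => u s - vpi γ P r π s) ?_ s
    · linarith
    intro s
    have h3 := vpi_fixed γ hγ0 hγ1 P hP0 hP1 r π hπ s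
    have h4 : rpi r π s + γ * ∑ s', Ppi P π s s' * u s' ≤ u s := by
      rw [Ppi_mul]
      calc _ = ∑ a, π s a * (r s a + γ * ∑ s', P s a s' * u s') := by
            simp only [rpi, mul_add, Finset.sum_add_distrib, Finset.mul_sum]
            congr 1
            refine Finset.sum_congr rfl fun a _ => Finset.sum_congr rfl fun s' _ => by ring
        _ ≤ ∑ a, π s a * u s :=
            Finset.sum_le_sum fun a _ => mul_le_mul_of_nonneg_left (h1 s a) (hπ.1 s a)
        _ = u s := by rw [← Finset.sum_mul, hπ.2, one_mul]
    simp_rw [mul_sub, Finset.sum_sub_distrib]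
    linarith
  let π : S → A → ℝ := fun s a => if a = g s then 1 else 0
  have hπ : IsPolicy π := ⟨fun s a => by simp only [π]; split_ifs <;> norm_num,
    fun s => by simp [π]⟩
  have heq : ∀ s, u s ≤ vpi γ P r π s := by
    intro s
    have := min_nonneg γ hγ0 hγ1 (Ppi P π) (Ppi_nonneg P hP0 π hπ) (Ppi_sum P hP1 π hπ)
      (fun s => vpi γ P r π s - u s) ?_ s
    · linarith
    intro s
    have h3 := vpi_fixed γ hγ0 hγ1 P hP0 hP1 r π hπ s
    have h4 : u s = rpi r π s + γ * ∑ s', Ppi P π s s' * u s' := by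
      rw [Ppi_mul]
      simpa [π, rpi] using h2 s
    simp_rw [mul_sub, Finset.sum_sub_distrib]
    linarith
  have hv : vstar γ P r = u := by
    funext s
    haveI : Nonempty {π : S → A → ℝ // IsPolicy π} := ⟨⟨π, hπ⟩⟩
    refine le_antisymm (ciSup_le fun p => hle p.1 p.2 s) ((heq s).trans ?_)
    exact le_ciSup (f := fun p : {π : S → A → ℝ // IsPolicy π} => vpi γ P r p.1 s)
      ⟨u s, by rintro _ ⟨p, rfl⟩; exact hle p.1 p.2 s⟩ ⟨π, hπ⟩
  exact ⟨g, by rw [hv]; exact ⟨h1, h2⟩⟩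

theorem P_phiDot {S A : Type} [Fintype S] {d : ℕ} (P : S → A → S → ℝ) (Φ : S → Fin d → ℝ)
    (θ : Fin d → ℝ) (s : S) (a : A) :
    ∑ s', P s a s' * phiDot Φ θ s' = ∑ j, (∑ s', P s a s' * Φ s' j) * θ j := by
  simp only [phiDot, Finset.sum_mul, Finset.mul_sum]
  rw [Finset.sum_comm]
  simp only [mul_assoc]

theorem constraint_dot {S A : Type} [Fintype S] [Fintype A] {d m : ℕ} (γ : ℝ)
    (P : S → A → S → ℝ) (Φ : S → Fin d → ℝ) (c : Fin m → S) (s₀ : S)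
    (lam : Option (Fin m) × A → ℝ) (h : CoreLPConstraint γ P Φ s₀ c lam) (θ : Fin d → ℝ) :
    ∑ p : Option (Fin m) × A, lam p * (phiDot Φ θ (splus s₀ c p.1) -
      γ * ∑ s', P (splus s₀ c p.1) p.2 s' * phiDot Φ θ s') = phiDot Φ θ s₀ := by
  have h1 : ∀ j, Φ s₀ j * θ j = ∑ p : Option (Fin m) × A,
      lam p * (Φ (splus s₀ c p.1) j * θ j -
        γ * ((∑ s', P (splus s₀ c p.1) p.2 s' * Φ s' j) * θ j)) := by
    intro j
    have : Φ s₀ j = - ∑ p : Option (Fin m) × A,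
      lam p * (γ * (∑ s', P (splus s₀ c p.1) p.2 s' * Φ s' j) - Φ (splus s₀ c p.1) j) := by
      linarith [h j]
    rw [this, ← Finset.sum_neg_distrib, Finset.sum_mul]
    exact Finset.sum_congr rfl fun p _ => by ring
  have h2 : phiDot Φ θ s₀ = ∑ j, Φ s₀ j * θ j := rfl
  rw [h2, Finset.sum_congr rfl fun j _ => h1 j, Finset.sum_comm]
  refine Finset.sum_congr rfl fun p _ => ?_
  rw [P_phiDot, ← Finset.mul_sum, Finset.sum_sub_distrib, ← Finset.mul_sum]
  rfl

theorem key_bound {S A : Type} [Fintype S] [Fintype A] {d m : ℕ} (γ : ℝ)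
    (hγ0 : 0 ≤ γ) (hγ1 : γ < 1)
    (P : S → A → S → ℝ) (hP0 : ∀ s a s', 0 ≤ P s a s')
    (hP1 : ∀ s a, ∑ s', P s a s' = 1)
    (Φ : S → Fin d → ℝ) (hfeat : ∃ η : Fin d → ℝ, ∀ s, phiDot Φ η s = 1)
    (c : Fin m → S) (s₀ : S)
    (lam : Option (Fin m) × A → ℝ) (hl : InLambda lam) (h : CoreLPConstraint γ P Φ s₀ c lam)
    (v : S → ℝ) (θ : Fin d → ℝ) (ε : ℝ) (hε : ∀ s, |v s - phiDot Φ θ s| ≤ ε) :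
    |∑ p : Option (Fin m) × A, lam p * (v (splus s₀ c p.1) -
      γ * ∑ s', P (splus s₀ c p.1) p.2 s' * v s') - v s₀| ≤ 2 * γ / (1 - γ) * ε := by
  have hg : 0 < 1 - γ := by linarith
  have hε0 : 0 ≤ ε := (abs_nonneg _).trans (hε s₀)
  -- total mass
  obtain ⟨η, hη⟩ := hfeat
  have hsum := constraint_dot γ P Φ c s₀ lam h η
  simp only [hη, mul_one, hP1] at hsum
  rw [← Finset.sum_mul, Fintype.sum_prod_type, Fintype.sum_option, hl.2] at hsum
  set L := ∑ i : Fin m, ∑ a, lam (some i, a) with hL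
  have hLe : L * (1 - γ) = γ := by linarith
  -- error function
  set e : S → ℝ := fun s => v s - phiDot Φ θ s with he
  have hPe : ∀ s a, |∑ s', P s a s' * e s'| ≤ ε := by
    intro s a
    calc _ ≤ ∑ s', |P s a s' * e s'| := Finset.abs_sum_le_sum_abs _ _
      _ ≤ ∑ s', P s a s' * ε := Finset.sum_le_sum fun s' _ => by
          rw [abs_mul, abs_of_nonneg (hP0 s a s')]
          exact mul_le_mul_of_nonneg_left (hε s') (hP0 s a s')
      _ = ε := by rw [← Finset.sum_mul, hP1, one_mul]
  have hθ := constraint_dot γ P Φ c s₀ lam h θ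
  have hid : ∑ p : Option (Fin m) × A, lam p * (v (splus s₀ c p.1) -
      γ * ∑ s', P (splus s₀ c p.1) p.2 s' * v s') - v s₀ =
      ∑ p : Option (Fin m) × A, lam p * (e (splus s₀ c p.1) -
      γ * ∑ s', P (splus s₀ c p.1) p.2 s' * e s') - e s₀ := by
    have : ∑ p : Option (Fin m) × A, lam p * (e (splus s₀ c p.1) -
      γ * ∑ s', P (splus s₀ c p.1) p.2 s' * e s') =
      ∑ p : Option (Fin m) × A, lam p * (v (splus s₀ c p.1) -
      γ * ∑ s', P (splus s₀ c p.1) p.2 s' * v s') - phiDot Φ θ s₀ := by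
      rw [← hθ, ← Finset.sum_sub_distrib]
      refine Finset.sum_congr rfl fun p _ => ?_
      simp only [he, mul_sub, Finset.sum_sub_distrib]
      ring
    rw [this]
    simp only [he]
    ring
  rw [hid, Fintype.sum_prod_type, Fintype.sum_option]
  have hnone : ∑ a, lam (none, a) * (e (splus s₀ c none) -
      γ * ∑ s', P (splus s₀ c none) a s' * e s') =
      e s₀ - γ * ∑ a, lam (none, a) * ∑ s', P s₀ a s' * e s' := by
    simp only [splus, Option.elim_none, mul_sub, Finset.sum_sub_distrib]
    rw [← Finset.sum_mul, hl.2, one_mul, Finset.mul_sum]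
    congr 1
    exact Finset.sum_congr rfl fun a _ => by ring
  have hb1 : |∑ a, lam (none, a) * ∑ s', P s₀ a s' * e s'| ≤ ε := by
    calc _ ≤ ∑ a, |lam (none, a) * ∑ s', P s₀ a s' * e s'| := Finset.abs_sum_le_sum_abs _ _
      _ ≤ ∑ a, lam (none, a) * ε := Finset.sum_le_sum fun a _ => by
          rw [abs_mul, abs_of_nonneg (hl.1 _)]
          exact mul_le_mul_of_nonneg_left (hPe s₀ a) (hl.1 _)
      _ = ε := by rw [← Finset.sum_mul, hl.2, one_mul]
  have hb2 : |∑ i : Fin m, ∑ a, lam (some i, a) * (e (splus s₀ c (some i)) -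
      γ * ∑ s', P (splus s₀ c (some i)) a s' * e s')| ≤ L * ((1 + γ) * ε) := by
    rw [hL, Finset.sum_mul]
    refine (Finset.abs_sum_le_sum_abs _ _).trans (Finset.sum_le_sum fun i _ => ?_)
    rw [Finset.sum_mul]
    refine (Finset.abs_sum_le_sum_abs _ _).trans (Finset.sum_le_sum fun a _ => ?_)
    rw [abs_mul, abs_of_nonneg (hl.1 _)]
    refine mul_le_mul_of_nonneg_left ?_ (hl.1 _)
    refine (abs_sub _ _).trans ?_
    rw [abs_mul, abs_of_nonneg hγ0]
    have h1 := hε (splus s₀ c (some i))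
    have h2 := mul_le_mul_of_nonneg_left (hPe (splus s₀ c (some i)) a) hγ0
    have h3 : |e (splus s₀ c (some i))| ≤ ε := h1
    linarith
  have hfin : 2 * γ / (1 - γ) * ε = γ * ε + L * ((1 + γ) * ε) := by
    have : L = γ / (1 - γ) := by rw [eq_div_iff hg.ne']; exact hLe
    rw [this]
    field_simp
    ring
  rw [hnone, hfin]
  have hb1' := mul_le_mul_of_nonneg_left hb1 hγ0
  rw [← abs_of_nonneg hγ0, ← abs_mul, abs_of_nonneg hγ0] at hb1'
  rw [abs_le] at *
  constructor <;> linarith [hb1'.1, hb1'.2, hb2.1, hb2.2]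

theorem exists_feasible {S A : Type} [Fintype S] [Fintype A] {d m : ℕ}
    (γ : ℝ) (hγ0 : 0 ≤ γ) (hγ1 : γ < 1)
    (P : S → A → S → ℝ) (hP0 : ∀ s a s', 0 ≤ P s a s')
    (hP1 : ∀ s a, ∑ s', P s a s' = 1)
    (Φ : S → Fin d → ℝ) (hfeat : ∃ η : Fin d → ℝ, ∀ s, phiDot Φ η s = 1)
    (c : Fin m → S)
    (hcore : ∃ Z : S → Fin m → ℝ, (∀ s i, 0 ≤ Z s i) ∧
      ∀ s j, Φ s j = ∑ i, Z s i * Φ (c i) j)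
    (s₀ : S) (g : S → A) :
    ∃ lam : Option (Fin m) × A → ℝ, InLambda lam ∧ CoreLPConstraint γ P Φ s₀ c lam ∧
      ∀ p, p.2 ≠ g (splus s₀ c p.1) → lam p = 0 := by
  classical
  obtain ⟨Z, hZ0, hZ⟩ := hcore
  obtain ⟨η, hη⟩ := hfeat
  have hZ1 : ∀ s, ∑ i, Z s i = 1 := by
    intro s
    have h1 : phiDot Φ η s = ∑ i, Z s i * phiDot Φ η (c i) := by
      simp only [phiDot, Finset.mul_sum]
      rw [Finset.sum_comm]
      refine Finset.sum_congr rfl fun j _ => ?_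
      rw [hZ s j, Finset.sum_mul]
      exact Finset.sum_congr rfl fun i _ => by ring
    simp only [hη, mul_one] at h1
    exact h1.symm
  let q : S → Fin m → ℝ := fun s k => ∑ s', P s (g s) s' * Z s' k
  have hq0 : ∀ s k, 0 ≤ q s k := fun s k =>
    Finset.sum_nonneg fun s' _ => mul_nonneg (hP0 _ _ _) (hZ0 _ _)
  have hq1 : ∀ s, ∑ k, q s k = 1 := by
    intro s
    simp only [q]
    rw [Finset.sum_comm]
    simp_rw [← Finset.mul_sum, hZ1, mul_one, hP1]
  have hqΦ : ∀ s j, ∑ s', P s (g s) s' * Φ s' j = ∑ k, q s k * Φ (c k) j := by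
    intro s j
    simp only [q, Finset.sum_mul]
    rw [Finset.sum_comm]
    refine Finset.sum_congr rfl fun s' _ => ?_
    rw [hZ s' j, Finset.mul_sum]
    exact Finset.sum_congr rfl fun i _ => by ring
  let Q : Matrix (Fin m) (Fin m) ℝ := Matrix.of fun i k => q (c i) k
  obtain ⟨N, -, hN, -, hN0⟩ := neumann γ hγ0 hγ1 Q (fun i k => hq0 _ _) (fun i => hq1 _)
  let x : Fin m → ℝ := Matrix.vecMul (γ • q s₀) N
  have hx0 : ∀ i, 0 ≤ x i := by
    intro i
    change 0 ≤ ∑ k, (γ * q s₀ k) * N k i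
    exact Finset.sum_nonneg fun k _ => mul_nonneg (mul_nonneg hγ0 (hq0 _ _)) (hN0 _ _)
  have hx : ∀ k, x k - γ * ∑ i, x i * q (c i) k = γ * q s₀ k := by
    have h1 : Matrix.vecMul x (1 - γ • Q) = γ • q s₀ := by
      simp only [x]
      rw [Matrix.vecMul_vecMul, hN, Matrix.vecMul_one]
    intro k
    have h2 := congrFun h1 k
    rw [Matrix.vecMul_sub, Matrix.vecMul_one, Matrix.vecMul_smul] at h2
    simpa [Matrix.vecMul, dotProduct, Q] using h2
  let w : Option (Fin m) → ℝ := fun o => o.elim 1 x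
  have hw0 : ∀ o, 0 ≤ w o := by
    intro o
    cases o with
    | none => exact zero_le_one
    | some i => exact hx0 i
  refine ⟨fun p => if p.2 = g (splus s₀ c p.1) then w p.1 else 0, ⟨fun p => ?_, ?_⟩, ?_, ?_⟩
  · dsimp only
    split_ifs
    · exact hw0 _
    · exact le_rfl
  · simp [w]
  · intro j
    rw [Fintype.sum_prod_type]
    simp only [ite_mul, zero_mul, Finset.sum_ite_eq', Finset.sum_ite_eq, Finset.mem_univ, if_true]
    rw [Fintype.sum_option]
    simp only [splus, Option.elim_none, Option.elim_some, w, hqΦ]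
    have h3 : ∑ i, x i * Φ (c i) j - γ * ∑ i, x i * ∑ k, q (c i) k * Φ (c k) j
        = γ * ∑ k, q s₀ k * Φ (c k) j := by
      have h4 : ∑ i, x i * ∑ k, q (c i) k * Φ (c k) j =
          ∑ k, (∑ i, x i * q (c i) k) * Φ (c k) j := by
        simp only [Finset.mul_sum, Finset.sum_mul]
        rw [Finset.sum_comm]
        simp only [mul_assoc]
      rw [h4, Finset.mul_sum, Finset.mul_sum, ← Finset.sum_sub_distrib]
      refine Finset.sum_congr rfl fun k _ => ?_
      linear_combination Φ (c k) j * hx k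
    have h5 : ∑ i, x i * (γ * ∑ k, q (c i) k * Φ (c k) j - Φ (c i) j) =
        γ * ∑ i, x i * ∑ k, q (c i) k * Φ (c k) j - ∑ i, x i * Φ (c i) j := by
      rw [Finset.mul_sum, ← Finset.sum_sub_distrib]
      exact Finset.sum_congr rfl fun i _ => by ring
    rw [h5]
    linarith
  · intro p hp
    simp [hp]

/-- `|V† − v*(s₀)| ≤ 10γ·ε_approx/(1−γ)` for CoreLP. -/
theorem corelp_value_close
    {S A : Type} [Fintype S] [Fintype A] [DecidableEq S] [Nonempty S] [Nonempty A]
    {d m : ℕ} (γ : ℝ) (hγ0 : 0 ≤ γ) (hγ1 : γ < 1)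
    (P : S → A → S → ℝ) (hP0 : ∀ s a s', 0 ≤ P s a s')
    (hP1 : ∀ s a, ∑ s', P s a s' = 1)
    (r : S → A → ℝ)
    (Φ : S → Fin d → ℝ) (hfeat : ∃ η : Fin d → ℝ, ∀ s, phiDot Φ η s = 1)
    (c : Fin m → S) (hc : Function.Injective c)
    (hcore : ∃ Z : S → Fin m → ℝ, (∀ s i, 0 ≤ Z s i) ∧
      ∀ s j, Φ s j = ∑ i, Z s i * Φ (c i) j)
    (s₀ : S) :
    |Vdagger γ P r Φ s₀ c - vstar γ P r s₀| ≤
      10 * γ * epsApprox Φ (vstar γ P r) / (1 - γ) := by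
  obtain ⟨g, hb1, hb2⟩ := vstar_bellman γ hγ0 hγ1 P hP0 hP1 r
  set v := vstar γ P r with hv
  have hg : 0 < 1 - γ := by linarith
  have hK : 0 ≤ 2 * γ / (1 - γ) := by positivity
  -- bound with the infimum
  have hkey : ∀ lam : Option (Fin m) × A → ℝ, InLambda lam → CoreLPConstraint γ P Φ s₀ c lam →
      |∑ p : Option (Fin m) × A, lam p * (v (splus s₀ c p.1) -
        γ * ∑ s', P (splus s₀ c p.1) p.2 s' * v s') - v s₀| ≤
        2 * γ / (1 - γ) * epsApprox Φ v := by
    intro lam hl h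
    rw [epsApprox, Real.mul_iInf_of_nonneg hK]
    refine le_ciInf fun θ => ?_
    exact key_bound γ hγ0 hγ1 P hP0 hP1 Φ hfeat c s₀ lam hl h v θ _
      fun s => le_ciSup (f := fun s => |v s - phiDot Φ θ s|) (Set.finite_range _).bddAbove s
  have hup : ∀ lam : Option (Fin m) × A → ℝ, InLambda lam →
      CoreLPObj r s₀ c lam ≤ ∑ p : Option (Fin m) × A, lam p * (v (splus s₀ c p.1) -
        γ * ∑ s', P (splus s₀ c p.1) p.2 s' * v s') := by
    intro lam hl
    refine Finset.sum_le_sum fun p _ => mul_le_mul_of_nonneg_left ?_ (hl.1 p)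
    linarith [hb1 (splus s₀ c p.1) p.2]
  obtain ⟨lam, hl, hc', hz⟩ := exists_feasible γ hγ0 hγ1 P hP0 hP1 Φ hfeat c hcore s₀ g
  have heq : CoreLPObj r s₀ c lam = ∑ p : Option (Fin m) × A, lam p * (v (splus s₀ c p.1) -
        γ * ∑ s', P (splus s₀ c p.1) p.2 s' * v s') := by
    refine Finset.sum_congr rfl fun p _ => ?_
    by_cases hp : p.2 = g (splus s₀ c p.1)
    · have := hb2 (splus s₀ c p.1)
      rw [← hp] at this
      congr 1
      linarith
    · rw [hz p hp, zero_mul, zero_mul]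
  have hub : ∀ x ∈ {x : ℝ | ∃ lam : Option (Fin m) × A → ℝ,
      InLambda lam ∧ CoreLPConstraint γ P Φ s₀ c lam ∧ x = CoreLPObj r s₀ c lam},
      x ≤ v s₀ + 2 * γ / (1 - γ) * epsApprox Φ v := by
    rintro x ⟨l, h1, h2, rfl⟩
    have h3 := (abs_le.1 (hkey l h1 h2)).2
    linarith [hup l h1]
  have hV1 : Vdagger γ P r Φ s₀ c ≤ v s₀ + 2 * γ / (1 - γ) * epsApprox Φ v :=
    csSup_le ⟨_, lam, hl, hc', rfl⟩ hub
  have hV2 : CoreLPObj r s₀ c lam ≤ Vdagger γ P r Φ s₀ c :=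
    le_csSup ⟨_, hub⟩ ⟨lam, hl, hc', rfl⟩
  have h3 := (abs_le.1 (hkey lam hl hc')).1
  have h4 : 0 ≤ 2 * γ / (1 - γ) * epsApprox Φ v := (abs_nonneg _).trans (hkey lam hl hc')
  have h5 : 10 * γ * epsApprox Φ v / (1 - γ) = 5 * (2 * γ / (1 - γ) * epsApprox Φ v) := by
    field_simp
    ring
  rw [h5, abs_le]
  constructor <;> linarith

end MDPPlan
end

section
/- Under the feature assumption (there exists η ∈ ℝ^d with Φη = 1), every feasible solution λ of CoreLP — that is, every λ ∈ Λ with φ_{s₀}ᵀ + λᵀW(γP − E)Φ = 0ᵀ — satisfies ‖λ‖₁ = 1/(1−γ). -/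
open scoped BigOperators

namespace MDPPlan

variable {S A : Type} [Fintype S] [Fintype A] [DecidableEq S] {d m : ℕ}

/-- every feasible solution of CoreLP has `‖λ‖₁ = 1/(1−γ)`. -/
theorem corelp_feasible_l1_norm
    {S A : Type} [Fintype S] [Fintype A] [DecidableEq S] [Nonempty S] [Nonempty A]
    {d m : ℕ} (γ : ℝ) (hγ0 : 0 ≤ γ) (hγ1 : γ < 1)
    (P : S → A → S → ℝ) (hP0 : ∀ s a s', 0 ≤ P s a s')
    (hP1 : ∀ s a, ∑ s', P s a s' = 1)
    (Φ : S → Fin d → ℝ) (hfeat : ∃ η : Fin d → ℝ, ∀ s, phiDot Φ η s = 1)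
    (c : Fin m → S) (hc : Function.Injective c)
    (s₀ : S)
    (lam : Option (Fin m) × A → ℝ) (hlam : InLambda lam)
    (hconstr : CoreLPConstraint γ P Φ s₀ c lam) :
    (∑ p : Option (Fin m) × A, |lam p|) = 1 / (1 - γ) := by
  obtain ⟨η, hη⟩ := hfeat
  have hinner : ∀ s a, ∑ j, (∑ s', P s a s' * Φ s' j) * η j = 1 := by
    intro s a
    simp_rw [Finset.sum_mul]
    rw [Finset.sum_comm]
    rw [← hP1 s a]
    refine Finset.sum_congr rfl fun s' _ => ?_
    have h := hη s'
    unfold phiDot at h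
    simp_rw [mul_assoc]
    rw [← Finset.mul_sum, h, mul_one]
  have hphi : ∀ s, ∑ j, Φ s j * η j = 1 := hη
  have hp : ∀ p : Option (Fin m) × A,
      ∑ j, (lam p * (γ * (∑ s', P (splus s₀ c p.1) p.2 s' * Φ s' j)
        - Φ (splus s₀ c p.1) j)) * η j = lam p * (γ - 1) := by
    intro p
    have e : ∀ j, (lam p * (γ * (∑ s', P (splus s₀ c p.1) p.2 s' * Φ s' j)
        - Φ (splus s₀ c p.1) j)) * η j
        = lam p * (γ * ((∑ s', P (splus s₀ c p.1) p.2 s' * Φ s' j) * η j)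
          - Φ (splus s₀ c p.1) j * η j) := fun j => by ring
    simp_rw [e]
    rw [← Finset.mul_sum, Finset.sum_sub_distrib, ← Finset.mul_sum, hinner, hphi, mul_one]
  have hsum : ∑ j, (Φ s₀ j + ∑ p : Option (Fin m) × A,
      lam p * (γ * (∑ s', P (splus s₀ c p.1) p.2 s' * Φ s' j)
        - Φ (splus s₀ c p.1) j)) * η j = 0 :=
    Finset.sum_eq_zero fun j _ => by rw [hconstr j, zero_mul]
  simp_rw [add_mul] at hsum
  rw [Finset.sum_add_distrib, hphi] at hsum
  simp_rw [Finset.sum_mul (s := (Finset.univ : Finset (Option (Fin m) × A)))] at hsum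
  rw [Finset.sum_comm, Finset.sum_congr rfl (fun p _ => hp p), ← Finset.sum_mul] at hsum
  rw [Finset.sum_congr rfl (fun p _ => abs_of_nonneg (hlam.1 p)),
    eq_div_iff (by linarith)]
  linarith

end MDPPlan
end

section
/- Under the feature and core-state assumptions, the optimal value of CoreLP decomposes as V† = max_{π∈Δ_𝒜} [ Σ_{a∈𝒜} π(a)·r_{s₀a} + V_LRALP(γμ_π) ], where μ_πᵀ = Σ_{a∈𝒜} π(a)·P_{s₀a}. -/
open scoped BigOperators

namespace MDPPlan

variable {S A : Type} [Fintype S] [Fintype A] [DecidableEq S] {d m : ℕ}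

theorem aux_sep {I : Type} [Fintype I] {d : ℕ} (Af : I → Fin d → ℝ)
    (b : Fin d → ℝ) (r : I → ℝ) (V M : ℝ) (hM : 0 < M) :
    (∃ l : I → ℝ, (∀ p, 0 ≤ l p) ∧ (∀ j, b j + ∑ p, l p * Af p j = 0) ∧ V ≤ ∑ p, l p * r p) ∨
    ∃ (θ : Fin d → ℝ) (t u : ℝ), 0 ≤ t ∧ (∀ p, M * (∑ j, Af p j * θ j + t * r p) < u) ∧
      u < -(∑ j, b j * θ j) + t * V := by
  classical
  let v : I → (Fin d → ℝ) × ℝ := fun p => (M • Af p, M * r p)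
  let L : (I → ℝ) →ₗ[ℝ] (Fin d → ℝ) × ℝ := Fintype.linearCombination ℝ v
  let K : Set ((Fin d → ℝ) × ℝ) := L '' stdSimplex ℝ I
  let T : Set ((Fin d → ℝ) × ℝ) := {-b} ×ˢ Set.Ici V
  have hK1 : Convex ℝ K := (convex_stdSimplex ℝ I).linear_image L
  have hK2 : IsCompact K := (isCompact_stdSimplex ℝ I).image (LinearMap.continuous_on_pi L)
  have hT1 : Convex ℝ T := (convex_singleton _).prod (convex_Ici V)
  have hT2 : IsClosed T := isClosed_singleton.prod isClosed_Ici
  by_cases hd : Disjoint K T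
  · right
    obtain ⟨f, u, w, h1, h2, h3⟩ := geometric_hahn_banach_compact_closed hK1 hK2 hT1 hT2 hd
    have hf : ∀ x : Fin d → ℝ, ∀ y : ℝ,
        f (x, y) = ∑ j, x j * f (Pi.single j 1, 0) + f (0, 1) * y := by
      intro x y
      have e : ((x, y) : (Fin d → ℝ) × ℝ) =
          ∑ j, x j • ((Pi.single j 1, 0) : (Fin d → ℝ) × ℝ) + y • ((0, 1) : (Fin d → ℝ) × ℝ) := by
        ext k
        · simp [Prod.fst_sum, Finset.sum_apply, Pi.single_apply]
        · simp [Prod.snd_sum]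
      conv_lhs => rw [e]
      simp only [map_add, map_sum, map_smul, smul_eq_mul]
      ring
    refine ⟨fun j => f (Pi.single j 1, 0), f (0, 1), u, ?_, ?_, ?_⟩
    · by_contra hneg
      push Not at hneg
      set t := f (0, 1)
      have h4 : ∀ y, V ≤ y → w < -(∑ j, b j * f (Pi.single j 1, 0)) + t * y := by
        intro y hy
        have := h3 (-b, y) ⟨rfl, hy⟩
        rw [hf] at this
        simpa [Finset.sum_neg_distrib] using this
      set B := -(∑ j, b j * f (Pi.single j 1, 0))
      have h5 := h4 (max V ((w - B) / t)) (le_max_left _ _)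
      have h6 : t * max V ((w - B) / t) ≤ t * ((w - B) / t) :=
        mul_le_mul_of_nonpos_left (le_max_right _ _) hneg.le
      rw [mul_div_cancel₀ _ hneg.ne] at h6
      linarith
    · intro p
      have := h1 (L (Pi.single p 1)) ⟨_, single_mem_stdSimplex ℝ p, rfl⟩
      simp only [L, Fintype.linearCombination_apply_single, one_smul, v] at this
      rw [hf] at this
      refine lt_of_eq_of_lt ?_ this
      rw [mul_add, Finset.mul_sum]
      simp only [Pi.smul_apply, smul_eq_mul]
      congr 1
      · exact Finset.sum_congr rfl fun j _ => by ring
      · ring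
    · have := h3 (-b, V) ⟨rfl, le_refl V⟩
      rw [hf] at this
      simp only [Pi.neg_apply, neg_mul, Finset.sum_neg_distrib] at this
      linarith
  · left
    rw [Set.not_disjoint_iff] at hd
    obtain ⟨x, ⟨l, hl, rfl⟩, hx⟩ := hd
    obtain ⟨hx1, hx2⟩ := hx
    simp only [L, Fintype.linearCombination_apply, v, Set.mem_singleton_iff] at hx1
    simp only [L, Fintype.linearCombination_apply, v, Set.mem_Ici] at hx2
    refine ⟨fun p => M * l p, fun p => mul_nonneg hM.le (hl.1 p), ?_, ?_⟩
    · intro j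
      have := congrFun hx1 j
      simp only [Prod.fst_sum, Finset.sum_apply, Prod.smul_fst, Pi.smul_apply, smul_eq_mul,
        Pi.neg_apply] at this
      have e : ∑ p, M * l p * Af p j = ∑ p, l p * (M * Af p j) :=
        Finset.sum_congr rfl fun p _ => by ring
      rw [e, this]; ring
    · simp only [Prod.snd_sum, Prod.smul_snd, smul_eq_mul] at hx2
      have e : ∑ p, M * l p * r p = ∑ p, l p * (M * r p) :=
        Finset.sum_congr rfl fun p _ => by ring
      rw [e]; exact hx2

theorem aux_swap {S : Type} [Fintype S] {d : ℕ} (w : S → ℝ) (Φ : S → Fin d → ℝ)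
    (θ : Fin d → ℝ) :
    ∑ j, (∑ s, w s * Φ s j) * θ j = ∑ s, w s * phiDot Φ θ s := by
  simp only [phiDot, Finset.sum_mul, Finset.mul_sum]
  rw [Finset.sum_comm]
  exact Finset.sum_congr rfl fun s _ => Finset.sum_congr rfl fun j _ => by ring

theorem aux_dot {S : Type} [Fintype S] {d : ℕ} (γ : ℝ) (w : S → ℝ) (Φ : S → Fin d → ℝ)
    (θ : Fin d → ℝ) (s : S) :
    ∑ j, (γ * (∑ s', w s' * Φ s' j) - Φ s j) * θ j =
      γ * (∑ s', w s' * phiDot Φ θ s') - phiDot Φ θ s := by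
  rw [← aux_swap, phiDot, Finset.mul_sum, ← Finset.sum_sub_distrib]
  exact Finset.sum_congr rfl fun j _ => by ring

theorem aux_lin {S : Type} {d : ℕ} (Φ : S → Fin d → ℝ)
    (θ η : Fin d → ℝ) (x y : ℝ) (s : S) :
    phiDot Φ (fun j => x * θ j + y * η j) s = x * phiDot Φ θ s + y * phiDot Φ η s := by
  simp only [phiDot, Finset.mul_sum, ← Finset.sum_add_distrib]
  exact Finset.sum_congr rfl fun j _ => by ring

theorem aux_lb {S A : Type} [Fintype S] [Nonempty S] [Nonempty A]
    {d m : ℕ} (γ : ℝ) (hγ0 : 0 ≤ γ) (hγ1 : γ < 1)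
    (P : S → A → S → ℝ) (hP0 : ∀ s a s', 0 ≤ P s a s')
    (hP1 : ∀ s a, ∑ s', P s a s' = 1)
    (r : S → A → ℝ)
    (Φ : S → Fin d → ℝ) (hfeat : ∃ η : Fin d → ℝ, ∀ s, phiDot Φ η s = 1)
    (c : Fin m → S)
    (hcore : ∃ Z : S → Fin m → ℝ, (∀ s i, 0 ≤ Z s i) ∧
      ∀ s j, Φ s j = ∑ i, Z s i * Φ (c i) j) (R : ℝ) (hR : ∀ s a, R ≤ r s a)
    (θ : Fin d → ℝ) (hθ : LRALPFeasible γ P r Φ c θ) (s : S) :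
    R / (1 - γ) ≤ phiDot Φ θ s := by
  obtain ⟨η, hη⟩ := hfeat
  obtain ⟨Z, hZ0, hZ⟩ := hcore
  have hZd : ∀ θ s, phiDot Φ θ s = ∑ i, Z s i * phiDot Φ θ (c i) := by
    intro θ s
    have := aux_swap (Z s) (fun i => Φ (c i)) θ
    simp only [← hZ] at this
    exact this
  have hZ1 : ∀ s, ∑ i, Z s i = 1 := by
    intro s
    have := hZd η s
    simp only [hη, mul_one] at this
    exact this.symm
  have hm : Nonempty (Fin m) := by
    by_contra h
    rw [not_nonempty_iff] at h
    have := hZ1 s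
    simp at this
  obtain ⟨i, hi⟩ := Finite.exists_min (fun i => phiDot Φ θ (c i))
  have hall : ∀ s, phiDot Φ θ (c i) ≤ phiDot Φ θ s := by
    intro s
    rw [hZd θ s]
    calc phiDot Φ θ (c i) = ∑ k, Z s k * phiDot Φ θ (c i) := by
          rw [← Finset.sum_mul, hZ1, one_mul]
      _ ≤ _ := Finset.sum_le_sum fun k _ => mul_le_mul_of_nonneg_left (hi k) (hZ0 s k)
  let a : A := Classical.arbitrary A
  have h1 := hθ i a
  have h2 : phiDot Φ θ (c i) ≤ ∑ s', P (c i) a s' * phiDot Φ θ s' := by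
    calc phiDot Φ θ (c i) = ∑ k, P (c i) a k * phiDot Φ θ (c i) := by
          rw [← Finset.sum_mul, hP1, one_mul]
      _ ≤ _ := Finset.sum_le_sum fun k _ => mul_le_mul_of_nonneg_left (hall k) (hP0 _ _ k)
  have h3 := mul_le_mul_of_nonneg_left h2 hγ0
  have h4 := hR (c i) a
  refine le_trans ?_ (hall s)
  rw [div_le_iff₀ (by linarith)]
  nlinarith

theorem aux_feas {S A : Type} [Fintype S] [Fintype A] [Nonempty S] [Nonempty A]
    {d m : ℕ} (γ : ℝ) (hγ1 : γ < 1)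
    (P : S → A → S → ℝ)
    (hP1 : ∀ s a, ∑ s', P s a s' = 1)
    (r : S → A → ℝ)
    (Φ : S → Fin d → ℝ) (hfeat : ∃ η : Fin d → ℝ, ∀ s, phiDot Φ η s = 1)
    (c : Fin m → S) : ∃ θ, LRALPFeasible γ P r Φ c θ := by
  obtain ⟨η, hη⟩ := hfeat
  obtain ⟨q, hq⟩ := Finite.exists_max (fun q : S × A => r q.1 q.2)
  set K := r q.1 q.2 / (1 - γ)
  have hK : K * (1 - γ) = r q.1 q.2 := div_mul_cancel₀ _ (by linarith)
  refine ⟨fun j => 0 * η j + K * η j, fun i a => ?_⟩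
  simp only [aux_lin, hη]
  rw [← Finset.sum_mul, hP1]
  have := hq (c i, a)
  simp only at this
  linarith

/-- Strong duality for LRALP. -/
theorem aux_strong {S A : Type} [Fintype S] [Fintype A] [Nonempty S] [Nonempty A]
    {d m : ℕ} (γ : ℝ) (hγ0 : 0 ≤ γ) (hγ1 : γ < 1)
    (P : S → A → S → ℝ) (hP0 : ∀ s a s', 0 ≤ P s a s')
    (hP1 : ∀ s a, ∑ s', P s a s' = 1)
    (r : S → A → ℝ)
    (Φ : S → Fin d → ℝ) (hfeat : ∃ η : Fin d → ℝ, ∀ s, phiDot Φ η s = 1)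
    (c : Fin m → S)
    (hcore : ∃ Z : S → Fin m → ℝ, (∀ s i, 0 ≤ Z s i) ∧
      ∀ s j, Φ s j = ∑ i, Z s i * Φ (c i) j)
    (μ : S → ℝ) (hμ0 : ∀ s, 0 ≤ μ s) (hμ1 : ∑ s, μ s = γ) :
    (∃ l : Fin m × A → ℝ, (∀ p, 0 ≤ l p) ∧
      (∀ j, ∑ s, μ s * Φ s j + ∑ p, l p *
        (γ * (∑ s', P (c p.1) p.2 s' * Φ s' j) - Φ (c p.1) j) = 0) ∧
      VLRALP γ P r Φ c μ ≤ ∑ p, l p * r (c p.1) p.2) := by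
  have hfe := aux_feas γ hγ1 P hP1 r Φ hfeat c
  obtain ⟨q, hq⟩ := Finite.exists_min (fun q : S × A => r q.1 q.2)
  have hbdd : BddBelow {x : ℝ | ∃ θ : Fin d → ℝ, LRALPFeasible γ P r Φ c θ ∧
      x = ∑ s, μ s * phiDot Φ θ s} := by
    refine ⟨∑ s, μ s * (r q.1 q.2 / (1 - γ)), ?_⟩
    rintro x ⟨θ, hθ, rfl⟩
    exact Finset.sum_le_sum fun s _ => mul_le_mul_of_nonneg_left
      (aux_lb γ hγ0 hγ1 P hP0 hP1 r Φ hfeat c hcore _ (fun s a => hq (s, a)) θ hθ s) (hμ0 s)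
  rcases hγ0.eq_or_lt with h0 | hpos
  · have hμ : ∀ s, μ s = 0 := by
      rw [← h0] at hμ1
      intro s
      exact (Finset.sum_eq_zero_iff_of_nonneg fun s _ => hμ0 s).1 hμ1 s (Finset.mem_univ s)
    refine ⟨fun _ => 0, fun _ => le_rfl, fun j => by simp [hμ], ?_⟩
    obtain ⟨θ, hθ⟩ := hfe
    refine (csInf_le hbdd ⟨θ, hθ, rfl⟩).trans ?_
    simp [hμ]
  have hM : 0 < γ / (1 - γ) := div_pos hpos (by linarith)
  rcases aux_sep (fun (p : Fin m × A) j => γ * (∑ s', P (c p.1) p.2 s' * Φ s' j) - Φ (c p.1) j)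
    (fun j => ∑ s, μ s * Φ s j) (fun p => r (c p.1) p.2) (VLRALP γ P r Φ c μ)
    (γ / (1 - γ)) hM with h | ⟨θ, t, u, ht, h1, h2⟩
  · exact h
  exfalso
  obtain ⟨η, hη⟩ := id hfeat
  simp only [aux_dot] at h1
  rw [aux_swap] at h2
  set V := VLRALP γ P r Φ c μ with hV
  have key : ∀ x : ℝ, 0 ≤ x → ∀ i a, x * t * r (c i) a + (γ * (∑ s', P (c i) a s' *
      phiDot Φ (fun j => x * θ j + x * (u / γ) * η j) s') -
      phiDot Φ (fun j => x * θ j + x * (u / γ) * η j) (c i)) ≤ 0 := by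
    intro x hx i a
    simp only [aux_lin, hη, mul_one, mul_add, Finset.sum_add_distrib]
    rw [← Finset.sum_mul, hP1]
    have e : ∑ s', P (c i) a s' * (x * phiDot Φ θ s') = x * ∑ s', P (c i) a s' * phiDot Φ θ s' := by
      rw [Finset.mul_sum]; exact Finset.sum_congr rfl fun j _ => by ring
    rw [e]
    have h3 := h1 (i, a)
    simp only at h3
    set Y := ∑ s', P (c i) a s' * phiDot Φ θ s'
    have h4 : γ * Y - phiDot Φ θ (c i) + t * r (c i) a < u / γ * (1 - γ) := by
      have h1g : 0 < 1 - γ := by linarith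
      rw [div_mul_eq_mul_div, div_lt_iff₀ h1g] at h3
      rw [div_mul_eq_mul_div, lt_div_iff₀ hpos]
      linarith
    nlinarith [mul_le_mul_of_nonneg_left h4.le hx]
  have val : ∀ x : ℝ, ∑ s, μ s * phiDot Φ (fun j => x * θ j + x * (u / γ) * η j) s =
      x * (∑ s, μ s * phiDot Φ θ s + u) := by
    intro x
    simp only [aux_lin, hη, mul_one, mul_add, Finset.sum_add_distrib]
    rw [← Finset.sum_mul, hμ1, Finset.mul_sum]
    congr 1
    · exact Finset.sum_congr rfl fun j _ => by ring
    · field_simp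
  rcases ht.eq_or_lt with h0 | htp
  · have hf : LRALPFeasible γ P (fun _ _ => 0) Φ c (fun j => 1 * θ j + 1 * (u / γ) * η j) := by
      intro i a
      have := key 1 zero_le_one i a
      rw [← h0] at this
      simpa only [mul_zero, zero_mul] using this
    have h5 := fun s => aux_lb γ hγ0 hγ1 P hP0 hP1 _ Φ hfeat c hcore 0 (fun _ _ => le_rfl) _ hf s
    have h6 : 0 ≤ ∑ s, μ s * phiDot Φ (fun j => 1 * θ j + 1 * (u / γ) * η j) s :=
      Finset.sum_nonneg fun s _ => mul_nonneg (hμ0 s) (by simpa using h5 s)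
    rw [val] at h6
    rw [← h0] at h2
    linarith
  · have hf : LRALPFeasible γ P r Φ c (fun j => t⁻¹ * θ j + t⁻¹ * (u / γ) * η j) := by
      intro i a
      have := key t⁻¹ (inv_nonneg.2 ht) i a
      rwa [inv_mul_cancel₀ htp.ne', one_mul] at this
    have h6 : V ≤ _ := csInf_le hbdd ⟨_, hf, rfl⟩
    rw [val, inv_mul_eq_div, le_div_iff₀ htp] at h6
    linarith

theorem aux_split {S A : Type} [Fintype A] {m : ℕ} (s₀ : S) (c : Fin m → S)
    (lam : Option (Fin m) × A → ℝ) (g : S → A → ℝ) :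
    ∑ p : Option (Fin m) × A, lam p * g (splus s₀ c p.1) p.2 =
      ∑ a, lam (none, a) * g s₀ a + ∑ p : Fin m × A, lam (some p.1, p.2) * g (c p.1) p.2 := by
  rw [Fintype.sum_prod_type, Fintype.sum_option, Fintype.sum_prod_type]
  rfl

theorem aux_constr {S A : Type} [Fintype S] [Fintype A]
    {d m : ℕ} (γ : ℝ) (P : S → A → S → ℝ) (Φ : S → Fin d → ℝ) (c : Fin m → S) (s₀ : S)
    (lam : Option (Fin m) × A → ℝ) (h1 : ∑ a, lam (none, a) = 1) :
    CoreLPConstraint γ P Φ s₀ c lam ↔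
      ∀ j, ∑ s, (γ * ∑ a, lam (none, a) * P s₀ a s) * Φ s j + ∑ p : Fin m × A,
        lam (some p.1, p.2) *
        (γ * (∑ s', P (c p.1) p.2 s' * Φ s' j) - Φ (c p.1) j) = 0 := by
  refine forall_congr' fun j => ?_
  rw [aux_split s₀ c lam (fun s a => γ * (∑ s', P s a s' * Φ s' j) - Φ s j)]
  have : ∑ a, lam (none, a) * (γ * (∑ s', P s₀ a s' * Φ s' j) - Φ s₀ j) =
      ∑ s, (γ * ∑ a, lam (none, a) * P s₀ a s) * Φ s j - Φ s₀ j := by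
    simp only [mul_sub, Finset.sum_sub_distrib]
    rw [← Finset.sum_mul, h1, one_mul]
    congr 1
    simp only [Finset.mul_sum, Finset.sum_mul]
    rw [Finset.sum_comm]
    exact Finset.sum_congr rfl fun s _ => Finset.sum_congr rfl fun j _ => by ring
  rw [this]
  constructor <;> intro h <;> linarith

theorem aux_sSup (X Y : Set ℝ) (h1 : Y ⊆ X) (h2 : ∀ x ∈ X, ∃ y ∈ Y, x ≤ y) (hY : Y.Nonempty) :
    sSup X = sSup Y := by
  by_cases hb : BddAbove X
  · refine le_antisymm (csSup_le (hY.mono h1) fun x hx => ?_) (csSup_le_csSup hb hY h1)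
    obtain ⟨y, hy, hxy⟩ := h2 x hx
    exact hxy.trans (le_csSup (hb.mono h1) hy)
  · have hb2 : ¬ BddAbove Y := by
      rintro ⟨B, hB⟩
      refine hb ⟨B, fun x hx => ?_⟩
      obtain ⟨y, hy, hxy⟩ := h2 x hx
      exact hxy.trans (hB hy)
    rw [Real.sSup_of_not_bddAbove hb, Real.sSup_of_not_bddAbove hb2]

theorem aux_weak {S A : Type} [Fintype S] [Fintype A]
    {d m : ℕ} (γ : ℝ) (P : S → A → S → ℝ) (r : S → A → ℝ)
    (Φ : S → Fin d → ℝ) (c : Fin m → S) (hf : ∃ θ, LRALPFeasible γ P r Φ c θ)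
    (μ : S → ℝ) (l : Fin m × A → ℝ) (hl : ∀ p, 0 ≤ l p)
    (h : ∀ j, ∑ s, μ s * Φ s j + ∑ p, l p *
        (γ * (∑ s', P (c p.1) p.2 s' * Φ s' j) - Φ (c p.1) j) = 0) :
    ∑ p, l p * r (c p.1) p.2 ≤ VLRALP γ P r Φ c μ := by
  obtain ⟨θ₀, h₀⟩ := hf
  refine le_csInf ⟨_, θ₀, h₀, rfl⟩ ?_
  rintro x ⟨θ, hθ, rfl⟩
  have e : ∑ j, (∑ s, μ s * Φ s j + ∑ p, l p *
        (γ * (∑ s', P (c p.1) p.2 s' * Φ s' j) - Φ (c p.1) j)) * θ j = 0 := by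
    simp [h]
  simp only [add_mul, Finset.sum_add_distrib] at e
  rw [aux_swap] at e
  have e2 := aux_swap l
    (fun p j => γ * (∑ s', P (c p.1) p.2 s' * Φ s' j) - Φ (c p.1) j) θ
  rw [e2] at e
  have e3 : ∑ p, l p * (r (c p.1) p.2 + phiDot
      (fun p j => γ * (∑ s', P (c p.1) p.2 s' * Φ s' j) - Φ (c p.1) j) θ p) ≤ 0 := by
    refine Finset.sum_nonpos fun p _ => mul_nonpos_of_nonneg_of_nonpos (hl p) ?_
    have := hθ p.1 p.2
    rw [← aux_dot] at this
    exact this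
  simp only [mul_add, Finset.sum_add_distrib] at e3
  linarith

/-- decomposition of `V†` over action distributions via `V_LRALP`. -/
theorem vdagger_decomposition
    {S A : Type} [Fintype S] [Fintype A] [DecidableEq S] [Nonempty S] [Nonempty A]
    {d m : ℕ} (γ : ℝ) (hγ0 : 0 ≤ γ) (hγ1 : γ < 1)
    (P : S → A → S → ℝ) (hP0 : ∀ s a s', 0 ≤ P s a s')
    (hP1 : ∀ s a, ∑ s', P s a s' = 1)
    (r : S → A → ℝ)
    (Φ : S → Fin d → ℝ) (hfeat : ∃ η : Fin d → ℝ, ∀ s, phiDot Φ η s = 1)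
    (c : Fin m → S) (hc : Function.Injective c)
    (hcore : ∃ Z : S → Fin m → ℝ, (∀ s i, 0 ≤ Z s i) ∧
      ∀ s j, Φ s j = ∑ i, Z s i * Φ (c i) j)
    (s₀ : S) :
    Vdagger γ P r Φ s₀ c =
      ⨆ π : {π : A → ℝ // (∀ a, 0 ≤ π a) ∧ ∑ a, π a = 1},
        ((∑ a, π.1 a * r s₀ a) +
          VLRALP γ P r Φ c (fun s => γ * ∑ a, π.1 a * P s₀ a s)) := by
  classical
  have hfe := aux_feas γ hγ1 P hP1 r Φ hfeat c
  unfold Vdagger iSup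
  apply aux_sSup
  · rintro x ⟨⟨π, h0, h1⟩, rfl⟩
    simp only
    have hμ1 : ∑ s, (fun s => γ * ∑ a, π a * P s₀ a s) s = γ := by
      simp only
      rw [← Finset.mul_sum, Finset.sum_comm]
      simp only [← Finset.mul_sum, hP1, mul_one, h1]
    obtain ⟨l, hl0, hl1, hl2⟩ := aux_strong γ hγ0 hγ1 P hP0 hP1 r Φ hfeat c hcore
      (fun s => γ * ∑ a, π a * P s₀ a s)
      (fun s => mul_nonneg hγ0 (Finset.sum_nonneg fun a _ => mul_nonneg (h0 a) (hP0 _ _ _))) hμ1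
    have hw := aux_weak γ P r Φ c hfe _ l hl0 hl1
    refine ⟨fun p => p.1.elim (π p.2) (fun i => l (i, p.2)), ⟨?_, h1⟩, ?_, ?_⟩
    · rintro ⟨_ | i, a⟩
      · exact h0 a
      · exact hl0 (i, a)
    · exact (aux_constr γ P Φ c s₀ _ h1).2 hl1
    · rw [CoreLPObj, aux_split, le_antisymm hl2 hw]
      rfl
  · rintro x ⟨lam, hlam, hcon, rfl⟩
    refine ⟨_, ⟨⟨fun a => lam (none, a), fun a => hlam.1 _, hlam.2⟩, rfl⟩, ?_⟩
    rw [CoreLPObj, aux_split]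
    refine add_le_add le_rfl ?_
    exact aux_weak γ P r Φ c hfe _ (fun p => lam (some p.1, p.2)) (fun p => hlam.1 _)
      ((aux_constr γ P Φ c s₀ lam hlam.2).1 hcon)
  · let a₀ : A := Classical.arbitrary A
    exact ⟨_, ⟨⟨fun a => if a = a₀ then 1 else 0, fun a => by dsimp only; split_ifs <;> norm_num, by simp⟩,
      rfl⟩⟩

end MDPPlan
end

section
/- Under the feature and core-state assumptions with ε_approx ≤ 1/16, suppose θ ∈ ℝ^d satisfies ‖Φθ − v*‖_∞ ≤ 2ε_approx/(1−γ) and W*r + W*(γP − E)Φθ ≤ 0 (feasibility for LRALP), and all rewards satisfy |r_{sa}| ≤ 1. Then ‖Φ*θ‖₂ ≤ (9/8)√m/(1−γ), and for every probability distribution μ ∈ Δ_𝒮 over states, μᵀΦθ − V_LRALP(μ) ≤ 12·ε_approx/(1−γ). -/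
open scoped BigOperators

namespace MDPPlan

variable {S A : Type} [Fintype S] [Fintype A] [DecidableEq S] {d m : ℕ}

lemma aux_pow (γ : ℝ) (hγ0 : 0 ≤ γ) (M : Matrix S S ℝ) (hM0 : ∀ s s', 0 ≤ M s s')
    (hM1 : ∀ s, ∑ s', M s s' = 1) (x : S → ℝ) (hx : ∀ s, |x s| ≤ 1) (t : ℕ) :
    ∀ s, |((γ • M) ^ t).mulVec x s| ≤ γ ^ t := by
  induction t with
  | zero => intro s; simpa using hx s
  | succ t ih =>
    intro s
    rw [pow_succ', ← Matrix.mulVec_mulVec]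
    set y := ((γ • M) ^ t).mulVec x
    rw [Matrix.smul_mulVec, Pi.smul_apply, smul_eq_mul, abs_mul, abs_of_nonneg hγ0, pow_succ,
      mul_comm (γ ^ t)]
    refine mul_le_mul_of_nonneg_left ?_ hγ0
    calc |M.mulVec y s| = |∑ s', M s s' * y s'| := rfl
      _ ≤ ∑ s', |M s s' * y s'| := Finset.abs_sum_le_sum_abs _ _
      _ ≤ ∑ s', M s s' * γ ^ t := by
          refine Finset.sum_le_sum fun s' _ => ?_
          rw [abs_mul, abs_of_nonneg (hM0 s s')]
          exact mul_le_mul_of_nonneg_left (ih s') (hM0 s s')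
      _ = γ ^ t := by rw [← Finset.sum_mul, hM1, one_mul]

lemma aux_series (γ : ℝ) (hγ0 : 0 ≤ γ) (hγ1 : γ < 1) (M : Matrix S S ℝ)
    (hM0 : ∀ s s', 0 ≤ M s s')
    (hM1 : ∀ s, ∑ s', M s s' = 1) (x : S → ℝ) (hx : ∀ s, |x s| ≤ 1) :
    (∀ s, |(∑' t : ℕ, ((γ • M) ^ t).mulVec x) s| ≤ 1 / (1 - γ)) ∧
    (∑' t : ℕ, ((γ • M) ^ t).mulVec x) =
      x + (γ • M).mulVec (∑' t : ℕ, ((γ • M) ^ t).mulVec x) := by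
  have hb : ∀ t : ℕ, ‖((γ • M) ^ t).mulVec x‖ ≤ γ ^ t := fun t =>
    (pi_norm_le_iff_of_nonneg (pow_nonneg hγ0 t)).2 fun s => aux_pow γ hγ0 M hM0 hM1 x hx t s
  have hg := summable_geometric_of_lt_one hγ0 hγ1
  have hs : Summable fun t : ℕ => ((γ • M) ^ t).mulVec x := Summable.of_norm_bounded hg hb
  constructor
  · intro s
    have h1 := tsum_of_norm_bounded (hasSum_geometric_of_lt_one hγ0 hγ1) hb
    rw [one_div]
    exact (norm_le_pi_norm _ s).trans h1
  · have h2 := (Matrix.mulVecLin (γ • M)).toContinuousLinearMap.map_tsum hs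
    simp only [LinearMap.coe_toContinuousLinearMap', Matrix.mulVecLin_apply,
      Matrix.mulVec_mulVec] at h2
    rw [h2, hs.tsum_eq_zero_add]
    simp [pow_succ']

lemma aux_wavg {ι : Type} [Fintype ι] (w f : ι → ℝ) (B : ℝ) (hw : ∀ i, 0 ≤ w i)
    (hw1 : ∑ i, w i = 1) (hf : ∀ i, f i ≤ B) : ∑ i, w i * f i ≤ B := by
  calc ∑ i, w i * f i ≤ ∑ i, w i * B :=
        Finset.sum_le_sum fun i _ => mul_le_mul_of_nonneg_left (hf i) (hw i)
    _ = B := by rw [← Finset.sum_mul, hw1, one_mul]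

lemma aux_wavg' {ι : Type} [Fintype ι] (w f : ι → ℝ) (B : ℝ) (hw : ∀ i, 0 ≤ w i)
    (hw1 : ∑ i, w i = 1) (hf : ∀ i, B ≤ f i) : B ≤ ∑ i, w i * f i := by
  calc B = ∑ i, w i * B := by rw [← Finset.sum_mul, hw1, one_mul]
    _ ≤ ∑ i, w i * f i :=
        Finset.sum_le_sum fun i _ => mul_le_mul_of_nonneg_left (hf i) (hw i)

lemma aux_vpi (γ : ℝ) (hγ0 : 0 ≤ γ) (hγ1 : γ < 1)
    (P : S → A → S → ℝ) (hP0 : ∀ s a s', 0 ≤ P s a s')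
    (hP1 : ∀ s a, ∑ s', P s a s' = 1)
    (r : S → A → ℝ) (hr : ∀ s a, |r s a| ≤ 1) (π : S → A → ℝ) (hπ : IsPolicy π) :
    (∀ s, |vpi γ P r π s| ≤ 1 / (1 - γ)) ∧
    ∀ s, vpi γ P r π s = ∑ a, π s a * (r s a + γ * ∑ s', P s a s' * vpi γ P r π s') := by
  have h := aux_series γ hγ0 hγ1 (Ppi P π)
    (fun s s' => Finset.sum_nonneg fun a _ => mul_nonneg (hπ.1 s a) (hP0 s a s'))
    (fun s => by
      simp only [Ppi, Matrix.of_apply]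
      rw [Finset.sum_comm]
      simp only [← Finset.mul_sum, hP1, mul_one, hπ.2])
    (rpi r π) (fun s => abs_le.2
      ⟨aux_wavg' _ _ _ (hπ.1 s) (hπ.2 s) fun a => (abs_le.1 (hr s a)).1,
       aux_wavg _ _ _ (hπ.1 s) (hπ.2 s) fun a => (abs_le.1 (hr s a)).2⟩)
  refine ⟨h.1, fun s => ?_⟩
  have h2 := congrFun h.2 s
  change vpi γ P r π s = rpi r π s + ((γ • Ppi P π).mulVec (vpi γ P r π)) s at h2
  rw [h2, Matrix.smul_mulVec, Pi.smul_apply, smul_eq_mul]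
  simp only [mul_add, Finset.sum_add_distrib]
  congr 1
  change γ * ∑ s', (∑ a, π s a * P s a s') * vpi γ P r π s' = _
  simp only [Finset.mul_sum, Finset.sum_mul]
  rw [Finset.sum_comm]
  refine Finset.sum_congr rfl fun a _ => Finset.sum_congr rfl fun s' _ => by ring

lemma aux_vstar [Nonempty A] (γ : ℝ) (hγ0 : 0 ≤ γ) (hγ1 : γ < 1)
    (P : S → A → S → ℝ) (hP0 : ∀ s a s', 0 ≤ P s a s')
    (hP1 : ∀ s a, ∑ s', P s a s' = 1)
    (r : S → A → ℝ) (hr : ∀ s a, |r s a| ≤ 1) :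
    (∀ s, |vstar γ P r s| ≤ 1 / (1 - γ)) ∧
    ∀ s, ∃ a, vstar γ P r s ≤ r s a + γ * ∑ s', P s a s' * vstar γ P r s' := by
  classical
  obtain ⟨a₀⟩ := ‹Nonempty A›
  have hπ0 : IsPolicy (fun (_ : S) (a : A) => if a = a₀ then (1 : ℝ) else 0) :=
    ⟨fun s a => by dsimp only; split_ifs <;> norm_num, fun s => by simp⟩
  haveI : Nonempty {π : S → A → ℝ // IsPolicy π} := ⟨⟨_, hπ0⟩⟩
  haveI : Nonempty A := ⟨a₀⟩
  have key := fun π hπ => aux_vpi γ hγ0 hγ1 P hP0 hP1 r hr π hπ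
  have hbdd : ∀ s, BddAbove (Set.range fun π : {π : S → A → ℝ // IsPolicy π} =>
      vpi γ P r π.1 s) := fun s => ⟨1 / (1 - γ), by
    rintro _ ⟨π, rfl⟩
    exact (abs_le.1 ((key π.1 π.2).1 s)).2⟩
  have hle : ∀ (π : {π : S → A → ℝ // IsPolicy π}) s, vpi γ P r π.1 s ≤ vstar γ P r s :=
    fun π s => le_ciSup (hbdd s) π
  refine ⟨fun s => abs_le.2 ⟨?_, ciSup_le fun π => (abs_le.1 ((key π.1 π.2).1 s)).2⟩,
    fun s => ?_⟩
  · exact (abs_le.1 ((key _ hπ0).1 s)).1.trans (hle ⟨_, hπ0⟩ s)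
  · obtain ⟨a, ha⟩ := Finite.exists_max
      (fun a => r s a + γ * ∑ s', P s a s' * vstar γ P r s')
    refine ⟨a, ciSup_le fun π => ?_⟩
    rw [(key π.1 π.2).2 s]
    refine aux_wavg _ _ _ (π.2.1 s) (π.2.2 s) fun b => le_trans ?_ (ha b)
    have := Finset.sum_le_sum (s := Finset.univ) fun s' _ =>
      mul_le_mul_of_nonneg_left (hle π s') (hP0 s b s')
    have := mul_le_mul_of_nonneg_left this hγ0
    linarith

lemma phiDot_lin (Φ : S → Fin d → ℝ) (x y z : Fin d → ℝ) (k : ℝ) (s : S) :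
    phiDot Φ (fun j => x j - y j + k * z j) s =
      phiDot Φ x s - phiDot Φ y s + k * phiDot Φ z s := by
  simp only [phiDot, Finset.mul_sum, ← Finset.sum_sub_distrib, ← Finset.sum_add_distrib]
  exact Finset.sum_congr rfl fun j _ => by ring

lemma phiDot_core (Φ : S → Fin d → ℝ) (c : Fin m → S) (Z : S → Fin m → ℝ)
    (hZ : ∀ s j, Φ s j = ∑ i, Z s i * Φ (c i) j) (x : Fin d → ℝ) (s : S) :
    phiDot Φ x s = ∑ i, Z s i * phiDot Φ x (c i) := by
  simp only [phiDot, Finset.mul_sum]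
  rw [Finset.sum_comm]
  refine Finset.sum_congr rfl fun j _ => ?_
  rw [hZ, Finset.sum_mul]
  exact Finset.sum_congr rfl fun i _ => by ring

lemma aux_lower [Nonempty S] [Nonempty A] (γ : ℝ) (hγ0 : 0 ≤ γ) (hγ1 : γ < 1)
    (P : S → A → S → ℝ) (hP0 : ∀ s a s', 0 ≤ P s a s')
    (hP1 : ∀ s a, ∑ s', P s a s' = 1)
    (r : S → A → ℝ) (hr : ∀ s a, |r s a| ≤ 1)
    (Φ : S → Fin d → ℝ) (η : Fin d → ℝ) (hη : ∀ s, phiDot Φ η s = 1)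
    (c : Fin m → S) (Z : S → Fin m → ℝ) (hZ0 : ∀ s i, 0 ≤ Z s i)
    (hZ : ∀ s j, Φ s j = ∑ i, Z s i * Φ (c i) j)
    (e : ℝ) (x : Fin d → ℝ) (hx : ∀ s, |vstar γ P r s - phiDot Φ x s| ≤ e)
    (y : Fin d → ℝ) (hy : LRALPFeasible γ P r Φ c y) (s : S) :
    vstar γ P r s - 3 * e / (1 - γ) ≤ phiDot Φ y s := by
  have hg : 0 < 1 - γ := by linarith
  have hZ1 : ∀ s, ∑ i, Z s i = 1 := fun s => by
    have := phiDot_core Φ c Z hZ η s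
    simp only [hη, mul_one] at this
    exact this.symm
  set k : ℝ := (1 + γ) * e / (1 - γ) with hk
  have hkk : k * (1 - γ) = (1 + γ) * e := by rw [hk]; field_simp
  set z : Fin d → ℝ := fun j => y j - x j + k * η j
  have hz : ∀ s, phiDot Φ z s = phiDot Φ y s - phiDot Φ x s + k := fun s => by
    rw [phiDot_lin, hη, mul_one]
  obtain ⟨s₀, hs₀⟩ := Finite.exists_min (phiDot Φ z)
  have hcore : ∀ i, γ * phiDot Φ z s₀ ≤ phiDot Φ z (c i) := fun i => by
    obtain ⟨a, ha⟩ := (aux_vstar γ hγ0 hγ1 P hP0 hP1 r hr).2 (c i)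
    have h1 := hy i a
    have h2 : phiDot Φ z s₀ ≤ ∑ s', P (c i) a s' * phiDot Φ z s' :=
      aux_wavg' _ _ _ (hP0 _ _) (hP1 _ _) hs₀
    have h3 : ∑ s', P (c i) a s' * (vstar γ P r s' - phiDot Φ x s') ≤ e :=
      aux_wavg _ _ _ (hP0 _ _) (hP1 _ _) fun s' => (abs_le.1 (hx s')).2
    have h4 := (abs_le.1 (hx (c i))).1
    simp only [hz, mul_add, mul_sub, Finset.sum_add_distrib, Finset.sum_sub_distrib,
      ← Finset.sum_mul, hP1, one_mul] at h2 h3 ⊢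
    have h5 := mul_le_mul_of_nonneg_left h2 hγ0
    have h6 := mul_le_mul_of_nonneg_left h3 hγ0
    simp only [mul_add, mul_sub] at h5 h6
    nlinarith
  have h7 : γ * phiDot Φ z s₀ ≤ phiDot Φ z s₀ := by
    rw [phiDot_core Φ c Z hZ z s₀]
    rw [← phiDot_core Φ c Z hZ z s₀]
    conv_rhs => rw [phiDot_core Φ c Z hZ z s₀]
    exact aux_wavg' _ _ _ (hZ0 _) (hZ1 _) hcore
  have h8 : 0 ≤ phiDot Φ z s₀ := by
    by_contra h
    nlinarith
  have h9 := hs₀ s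
  rw [hz s] at h9
  have h10 := (abs_le.1 (hx s)).2
  have he : 0 ≤ e := (abs_nonneg _).trans (hx s)
  have h11 : e + k ≤ 3 * e / (1 - γ) := by
    rw [le_div_iff₀ hg]
    nlinarith [mul_nonneg he hγ0]
  linarith

/-- a near-optimal feasible `θ` has `‖Φ*θ‖₂ ≤ (9/8)√m/(1−γ)` and is at most
`12 ε_approx/(1−γ)`-suboptimal for LRALP with any initial distribution `μ`. -/
theorem feasible_theta_bounded_and_subopt
    {S A : Type} [Fintype S] [Fintype A] [DecidableEq S] [Nonempty S] [Nonempty A]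
    {d m : ℕ} (γ : ℝ) (hγ0 : 0 ≤ γ) (hγ1 : γ < 1)
    (P : S → A → S → ℝ) (hP0 : ∀ s a s', 0 ≤ P s a s')
    (hP1 : ∀ s a, ∑ s', P s a s' = 1)
    (r : S → A → ℝ) (hr : ∀ s a, |r s a| ≤ 1)
    (Φ : S → Fin d → ℝ) (hfeat : ∃ η : Fin d → ℝ, ∀ s, phiDot Φ η s = 1)
    (c : Fin m → S) (hc : Function.Injective c)
    (hcore : ∃ Z : S → Fin m → ℝ, (∀ s i, 0 ≤ Z s i) ∧
      ∀ s j, Φ s j = ∑ i, Z s i * Φ (c i) j)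
    (hε : epsApprox Φ (vstar γ P r) ≤ 1 / 16)
    (θ : Fin d → ℝ)
    (hθv : ∀ s, |phiDot Φ θ s - vstar γ P r s| ≤
      2 * epsApprox Φ (vstar γ P r) / (1 - γ))
    (hfeas : LRALPFeasible γ P r Φ c θ) :
    Real.sqrt (∑ i : Fin m, (phiDot Φ θ (c i)) ^ 2) ≤
        (9 / 8) * Real.sqrt m / (1 - γ) ∧
      ∀ μ : S → ℝ, (∀ s, 0 ≤ μ s) → (∑ s, μ s = 1) →
        ∑ s, μ s * phiDot Φ θ s - VLRALP γ P r Φ c μ ≤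
          12 * epsApprox Φ (vstar γ P r) / (1 - γ) := by
  have hg : 0 < 1 - γ := by linarith
  obtain ⟨hvb, -⟩ := aux_vstar γ hγ0 hγ1 P hP0 hP1 r hr
  constructor
  · have hB : ∀ i, (phiDot Φ θ (c i)) ^ 2 ≤ ((9 / 8) / (1 - γ)) ^ 2 := fun i => by
      rw [← sq_abs]
      refine pow_le_pow_left₀ (abs_nonneg _) ?_ 2
      have h1 := hθv (c i)
      have h2 := hvb (c i)
      have h3 : 2 * epsApprox Φ (vstar γ P r) / (1 - γ) ≤ (1 / 8) / (1 - γ) := by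
        gcongr; linarith
      have h4 : (1 / 8) / (1 - γ) + 1 / (1 - γ) = (9 / 8) / (1 - γ) := by ring
      have h5 := abs_add_le (phiDot Φ θ (c i) - vstar γ P r (c i)) (vstar γ P r (c i))
      rw [sub_add_cancel] at h5
      linarith
    have h0 : 0 ≤ (9 / 8) / (1 - γ) := by positivity
    calc Real.sqrt (∑ i : Fin m, (phiDot Φ θ (c i)) ^ 2)
        ≤ Real.sqrt (∑ i : Fin m, ((9 / 8) / (1 - γ)) ^ 2) :=
          Real.sqrt_le_sqrt (Finset.sum_le_sum fun i _ => hB i)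
      _ = (9 / 8) * Real.sqrt m / (1 - γ) := by
          rw [Finset.sum_const, Finset.card_univ, Fintype.card_fin, nsmul_eq_mul,
            Real.sqrt_mul (Nat.cast_nonneg m), Real.sqrt_sq h0]
          ring
  · intro μ hμ0 hμ1
    obtain ⟨η, hη⟩ := hfeat
    obtain ⟨Z, hZ0, hZ⟩ := hcore
    set ε := epsApprox Φ (vstar γ P r) with hεdef
    have hε0 : 0 ≤ ε := Real.iInf_nonneg fun x => Real.iSup_nonneg fun s => abs_nonneg _
    have main : ∀ δ : ℝ, 0 < δ →
        ∑ s, μ s * phiDot Φ θ s - VLRALP γ P r Φ c μ ≤ 5 * ε / (1 - γ) + δ := by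
      intro δ hδ
      have hlt : ε < ε + δ * (1 - γ) / 3 := by
        have : 0 < δ * (1 - γ) / 3 := by positivity
        linarith
      obtain ⟨x, hx⟩ := exists_lt_of_ciInf_lt hlt
      have hx' : ∀ s, |vstar γ P r s - phiDot Φ x s| ≤ ε + δ * (1 - γ) / 3 := fun s =>
        (le_ciSup (f := fun s => |vstar γ P r s - phiDot Φ x s|)
          (Set.finite_range _).bddAbove s).trans hx.le
      have hcalc : 3 * (ε + δ * (1 - γ) / 3) / (1 - γ) = 3 * ε / (1 - γ) + δ := by
        field_simp
      have hV : ∑ s, μ s * phiDot Φ θ s - (5 * ε / (1 - γ) + δ) ≤ VLRALP γ P r Φ c μ := by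
        refine le_csInf ⟨_, θ, hfeas, rfl⟩ ?_
        rintro _ ⟨y, hy, rfl⟩
        have h1 := aux_wavg μ (fun s => phiDot Φ θ s - phiDot Φ y s) (5 * ε / (1 - γ) + δ)
          hμ0 hμ1 fun s => by
            have h2 := aux_lower γ hγ0 hγ1 P hP0 hP1 r hr Φ η hη c Z hZ0 hZ _ x hx' y hy s
            rw [hcalc] at h2
            have h3 := (abs_le.1 (hθv s)).2
            have h4 : 5 * ε / (1 - γ) = 3 * ε / (1 - γ) + 2 * ε / (1 - γ) := by ring
            linarith
        simp only [mul_sub, Finset.sum_sub_distrib] at h1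
        linarith
      linarith
    refine (le_of_forall_pos_le_add main).trans ?_
    gcongr
    norm_num


end MDPPlan
end

section
/- Let h: ℝ_+^n → ℝ be the unnormalized negentropy h(x) = Σ_i x_i(log x_i − 1) on n = (1+m)A coordinates indexed by the actions at a planning state s₀ and by core state–action pairs, γ ∈ (0,1), and h_γ(λ) := h((1−γ)λ)/(1−γ)². Let λ₀ assign 1/A to each coordinate (s₀,a), a ∈ 𝒜, and γ/((1−γ)mA) to each core coordinate (s,a) ∈ 𝒮*×𝒜; let λ̄ = e_{(s₀,a)} ⊕ (γ/(1−γ))·e_{(s',a')} for some fixed a ∈ 𝒜 and (s',a') ∈ 𝒮*×𝒜. Then the Bregman divergence satisfies D_{h_γ}(λ̄, λ₀) = (log A + γ log m)/(1−γ)². -/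
open scoped BigOperators

/-- The scaled unnormalized negentropy `h_γ(λ) = h((1−γ)λ)/(1−γ)²`, where
`h(x) = Σ_i x_i (log x_i − 1)`. -/
noncomputable def hGamma {ι : Type} [Fintype ι] (γ : ℝ) (lam : ι → ℝ) : ℝ :=
  (∑ i, ((1 - γ) * lam i) * (Real.log ((1 - γ) * lam i) - 1)) / (1 - γ) ^ 2

/-- the Bregman divergence `D_{h_γ}(λ̄, λ₀)` between the extreme point
`λ̄ = e_{(s₀,a₀)} ⊕ (γ/(1−γ)) e_{(s',a')}` and the center
`λ₀ = (1/A on the s₀-block) ⊕ (γ/((1−γ)mA) on the core block)` equals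
`(log A + γ log m)/(1−γ)²`.  Coordinates are indexed by `Option (Fin m) × Fin A`,
where `none` stands for the planning state `s₀` and `some i` for the `i`-th core state;
`∇h_γ(λ)_p = log((1−γ)λ_p)/(1−γ)`. -/
theorem bregman_divergence_center_to_extreme
    {m A : ℕ} (hm : 0 < m) (hA : 0 < A)
    (γ : ℝ) (hγ0 : 0 < γ) (hγ1 : γ < 1)
    (a₀ : Fin A) (i' : Fin m) (a' : Fin A) :
    let lam0 : Option (Fin m) × Fin A → ℝ :=
      fun p => if p.1 = none then 1 / (A : ℝ) else γ / ((1 - γ) * m * A)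
    let lamBar : Option (Fin m) × Fin A → ℝ :=
      fun p => if p = (none, a₀) then 1
        else if p = (some i', a') then γ / (1 - γ) else 0
    hGamma γ lamBar - hGamma γ lam0 -
        (∑ p : Option (Fin m) × Fin A,
          (Real.log ((1 - γ) * lam0 p) / (1 - γ)) * (lamBar p - lam0 p)) =
      (Real.log A + γ * Real.log m) / (1 - γ) ^ 2 := by
  intro lam0 lamBar
  have hg : (1 - γ) ≠ 0 := by linarith
  have hγ : γ ≠ 0 := hγ0.ne'
  have hA' : (A : ℝ) ≠ 0 := by positivity
  have hm' : (m : ℝ) ≠ 0 := by positivity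
  have two : ∀ F : Option (Fin m) × Fin A → ℝ,
      (∀ p, p ≠ (none, a₀) → p ≠ (some i', a') → F p = 0) →
      ∑ p, F p = F (none, a₀) + F (some i', a') := by
    intro F hF
    exact Fintype.sum_eq_add _ _ (by simp) (fun p hp => hF p hp.1 hp.2)
  have b1 : lamBar (none, a₀) = 1 := by simp [lamBar]
  have b2 : lamBar (some i', a') = γ / (1 - γ) := by simp [lamBar]
  have b3 : ∀ p, p ≠ (none, a₀) → p ≠ (some i', a') → lamBar p = 0 := by
    intro p h1 h2
    simp [lamBar, h1, h2]
  have c1 : ∀ a, lam0 (none, a) = 1 / (A : ℝ) := by intro a; simp [lam0]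
  have c2 : ∀ i a, lam0 (some i, a) = γ / ((1 - γ) * m * A) := by intro i a; simp [lam0]
  clear_value lam0 lamBar
  have e1 : (1 - γ) * (γ / (1 - γ)) = γ := by field_simp
  have e2 : (1 - γ) * (γ / ((1 - γ) * m * A)) = γ / (m * A) := by field_simp
  have l1 : Real.log ((1 - γ) * (1 / (A : ℝ))) = Real.log (1 - γ) - Real.log A := by
    rw [mul_one_div, Real.log_div hg hA']
  have l2 : Real.log (γ / (m * A)) = Real.log γ - (Real.log m + Real.log A) := by
    rw [Real.log_div hγ (mul_ne_zero hm' hA'), Real.log_mul hm' hA']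
  simp only [hGamma, mul_sub (Real.log _ / (1 - γ)), Finset.sum_sub_distrib]
  rw [two (fun p => (1 - γ) * lamBar p * (Real.log ((1 - γ) * lamBar p) - 1))
      (fun p h1 h2 => by simp [b3 p h1 h2]),
    two (fun p => Real.log ((1 - γ) * lam0 p) / (1 - γ) * lamBar p)
      (fun p h1 h2 => by simp [b3 p h1 h2])]
  simp only [Fintype.sum_prod_type, Fintype.sum_option, b1, b2, c1, c2, e1, e2, l1, l2,
    Finset.sum_const, Finset.card_univ, Fintype.card_fin, nsmul_eq_mul, mul_one]
  field_simp
  ring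
end
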